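/- arXiv:math/0503532 — 7 statements merged into one kernel-verified Lean document; each statement's English description precedes it below -/
import Mathlib

section
/- For every n ≥ 0 and every nonnegative measurable function φ : (X × X)^{n+1} → ℝ₊, the expectation of φ(X̄_0, …, X̄_n)·1(d_n = 0) under the law P_{ξ⊗ξ'⊗δ_0} of the coupled bell-variable chain equals the expectation under P*_{ξ⊗ξ'} of φ(X̄_0, …, X̄_n)·(1−ε)^{N_{n−1}}, where X̄_i = (X_i, X'_i), N_i := Σ_{j=0}^{i} 1_{C̄}(X̄_j) and N_{−1} := 0. -/
open MeasureTheory ProbabilityTheory Set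
open scoped ENNReal

/-- Expectation `E_y[φ(X₀,…,Xₙ)]` for the Markov chain with kernel `κ` started at `y`. -/
noncomputable def kexp {Y : Type*} [MeasurableSpace Y] (κ : Kernel Y Y) :
    (n : ℕ) → Y → ((Fin (n + 1) → Y) → ℝ≥0∞) → ℝ≥0∞
  | 0, y, φ => φ (fun _ => y)
  | n + 1, y, φ => ∫⁻ y', kexp κ n y' (fun v => φ (Fin.cons y v)) ∂(κ y)

/-- Expectation `E_μ[φ(X₀,…,Xₙ)]` for the Markov chain with kernel `κ` and initial law `μ`. -/
noncomputable def chainExp {Y : Type*} [MeasurableSpace Y] (κ : Kernel Y Y) (μ : Measure Y)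
    (n : ℕ) (φ : (Fin (n + 1) → Y) → ℝ≥0∞) : ℝ≥0∞ :=
  ∫⁻ y, kexp κ n y φ ∂μ

/-!
Forget the coupled paths: since `d = 1` is absorbing, `1(dₙ = 0)` turns the bell chain into a chain
on `X × X` that is killed when the bell rings. From `p`, the killed chain moves according to the
sub-Markov kernel `(1 - ε)^{1_{C̄}(p)} P*(p, ·)`, and the expectation along a chain whose kernel
carries a weight is the expectation along the unweighted chain with the product of the weights
collected over the visited states `X̄₀, …, X̄ₙ₋₁`; here this product is `(1 - ε)^{N_{n-1}}`.
-/

section ChainExpectation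

variable {Y Z : Type*} [MeasurableSpace Y] [MeasurableSpace Z]

theorem kexp_const_mul (κ : Kernel Y Y) {c : ℝ≥0∞} (hc : c ≠ ∞) (n : ℕ) (y : Y)
    (φ : (Fin (n + 1) → Y) → ℝ≥0∞) :
    kexp κ n y (fun v => c * φ v) = c * kexp κ n y φ := by
  induction n generalizing y with
  | zero => rfl
  | succ n ih => simp only [kexp, ih, lintegral_const_mul' _ _ hc]

theorem kexp_of_eq_smul {κ K : Kernel Y Y} {w : Y → ℝ≥0∞} (hw : ∀ y, w y ≠ ∞)
    (hκ : ∀ y, κ y = w y • K y) (n : ℕ) (y : Y) (φ : (Fin (n + 1) → Y) → ℝ≥0∞) :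
    kexp κ n y φ = kexp K n y (fun v => φ v * ∏ i : Fin n, w (v i.castSucc)) := by
  induction n generalizing y with
  | zero => simp [kexp]
  | succ n ih =>
    have hprod (v : Fin (n + 1) → Y) :
        ∏ i : Fin (n + 1), w ((Fin.cons y v : Fin (n + 2) → Y) i.castSucc) =
          w y * ∏ i : Fin n, w (v i.castSucc) := by
      simp only [Fin.prod_univ_succ, Fin.castSucc_zero, Fin.cons_zero, ← Fin.succ_castSucc,
        Fin.cons_succ]
    simp only [kexp, hprod, mul_left_comm _ (w y), kexp_const_mul K (hw y), ← ih]
    rw [hκ, lintegral_smul_measure, lintegral_const_mul' _ _ (hw y), smul_eq_mul]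

theorem kexp_eq_zero_of_absorbing {κ : Kernel Y Y} {S : Set Y}
    (hS : ∀ y ∈ S, ∀ᵐ y' ∂κ y, y' ∈ S) {n : ℕ} {y : Y} (hy : y ∈ S)
    {φ : (Fin (n + 1) → Y) → ℝ≥0∞} (hφ : ∀ v, v (Fin.last n) ∈ S → φ v = 0) :
    kexp κ n y φ = 0 := by
  induction n generalizing y with
  | zero => exact hφ _ hy
  | succ n ih =>
    refine lintegral_eq_zero_of_ae_eq_zero ((hS y hy).mono fun y' hy' => ih hy' fun v hv => ?_)
    exact hφ _ (by rwa [← Fin.succ_last, Fin.cons_succ])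

theorem lintegral_comap_of_support_subset_range {f : Y → Z} (hf : MeasurableEmbedding f)
    (μ : Measure Z) {g : Z → ℝ≥0∞} (hg : g.support ⊆ range f) :
    ∫⁻ y, g (f y) ∂μ.comap f = ∫⁻ z, g z ∂μ := by
  rw [← hf.lintegral_map, hf.map_comap, setLIntegral_eq_of_support_subset hg]

/-- The sub-Markov kernel on `Y` of the chain with kernel `Q` on `Z` killed when it leaves `Y`,
where `Y` is regarded as a measurable subset of `Z` through the embedding `f`. -/
noncomputable def killedKernel (Q : Kernel Z Z) {f : Y → Z} (hf : MeasurableEmbedding f) :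
    Kernel Y Y :=
  (Q.comap f hf.measurable).comapRight hf

theorem killedKernel_apply (Q : Kernel Z Z) {f : Y → Z} (hf : MeasurableEmbedding f) (y : Y) :
    killedKernel Q hf y = (Q (f y)).comap f :=
  rfl

theorem kexp_eq_kexp_killedKernel {Q : Kernel Z Z} {f : Y → Z} (hf : MeasurableEmbedding f)
    (hQ : ∀ z ∈ (range f)ᶜ, ∀ᵐ z' ∂Q z, z' ∈ (range f)ᶜ) {n : ℕ} (y : Y)
    {ψ : (Fin (n + 1) → Z) → ℝ≥0∞} (hψ : ∀ w, w (Fin.last n) ∈ (range f)ᶜ → ψ w = 0) :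
    kexp Q n (f y) ψ = kexp (killedKernel Q hf) n y (fun v => ψ (f ∘ v)) := by
  induction n generalizing y with
  | zero => rfl
  | succ n ih =>
    have hψcons (w : Fin (n + 1) → Z) (hw : w (Fin.last n) ∈ (range f)ᶜ) :
        ψ (Fin.cons (f y) w) = 0 :=
      hψ _ (by rwa [← Fin.succ_last, Fin.cons_succ])
    have hsupp : (fun z => kexp Q n z fun w => ψ (Fin.cons (f y) w)).support ⊆ range f :=
      fun z hz => by_contra fun hzf => hz (kexp_eq_zero_of_absorbing hQ hzf hψcons)
    simp only [kexp, killedKernel_apply, Fin.comp_cons]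
    rw [← lintegral_comap_of_support_subset_range hf _ hsupp]
    exact lintegral_congr fun y' => ih y' hψcons

end ChainExpectation

section BellKernel

variable {α β γ : Type*} [MeasurableSpace α] [MeasurableSpace β] [MeasurableSpace γ]
  [MeasurableSingletonClass γ]

theorem map_prodMk_const_apply_prod_singleton_self (μ : Measure β) (c : γ) (A : Set β) :
    μ.map (fun b => (b, c)) (A ×ˢ {c}) = μ A := by
  rw [(measurableEmbedding_prod_mk_right c).map_apply]
  simp [preimage]

theorem map_prodMk_const_apply_prod_singleton_of_ne {f : α → β} (hf : Measurable f) {b c : γ}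
    (hbc : b ≠ c) (μ : Measure α) (A : Set β) :
    μ.map (fun a => (f a, b)) (A ×ˢ {c}) = 0 := by
  refine measure_mono_null (prod_mono_left (subset_univ A)) ?_
  rw [Measure.map_apply (by fun_prop) (MeasurableSet.univ.prod (measurableSet_singleton c))]
  simp [hbc, preimage]

variable {X : Type*} [MeasurableSpace X] {Q : Kernel ((X × X) × Bool) ((X × X) × Bool)}

theorem bell_coupled_apply_uncoupled {P : Kernel X X}
    (hQ1 : ∀ x x' : X, Q ((x, x'), true) = (P x).map (fun y => ((y, y), true))) (p : X × X) :
    Q (p, true) (univ ×ˢ {false}) = 0 := by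
  rw [hQ1 p.1 p.2]
  exact map_prodMk_const_apply_prod_singleton_of_ne (by fun_prop) (by decide) _ _

theorem bell_uncoupled_apply_uncoupled {Cbar : Set (X × X)} {ε : ℝ} {ν : X × X → Measure X}
    {Rbar Pbar Pstar : Kernel (X × X) (X × X)}
    (hPstar1 : ∀ p ∈ Cbar, Pstar p = Rbar p) (hPstar2 : ∀ p ∉ Cbar, Pstar p = Pbar p)
    (hQ2 : ∀ p ∈ Cbar, Q (p, false) =
      ENNReal.ofReal ε • (ν p).map (fun y => ((y, y), true)) +
        ENNReal.ofReal (1 - ε) • (Rbar p).map (fun z => (z, false)))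
    (hQ3 : ∀ p ∉ Cbar, Q (p, false) = (Pbar p).map (fun z => (z, false)))
    (p : X × X) (A : Set (X × X)) :
    Q (p, false) (A ×ˢ {false}) =
      ENNReal.ofReal (1 - ε) ^ Cbar.indicator (fun _ => (1 : ℕ)) p * Pstar p A := by
  by_cases hp : p ∈ Cbar
  · have hcoupled : (ν p).map (fun y => ((y, y), true)) (A ×ˢ {false}) = 0 :=
      map_prodMk_const_apply_prod_singleton_of_ne (by fun_prop) (by decide) _ _
    simp [hQ2 p hp, hPstar1 p hp, hp, hcoupled, map_prodMk_const_apply_prod_singleton_self]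
  · simp [hQ3 p hp, hPstar2 p hp, hp, map_prodMk_const_apply_prod_singleton_self]

end BellKernel

theorem bell_chain_residual_identity_general
    {Y : Type*} [MeasurableSpace Y] {K : Kernel Y Y} {w : Y → ℝ≥0∞} (hw : ∀ y, w y ≠ ∞)
    {Q : Kernel (Y × Bool) (Y × Bool)}
    (hQ_coupled : ∀ y, Q (y, true) (univ ×ˢ {false}) = 0)
    (hQ_uncoupled : ∀ y, ∀ A : Set Y, MeasurableSet A →
      Q (y, false) (A ×ˢ {false}) = w y * K y A)
    (μ : Measure Y) (n : ℕ) (φ : (Fin (n + 1) → Y) → ℝ≥0∞) :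
    chainExp Q (μ.map (fun y => (y, false))) n
        (fun v => if (v (Fin.last n)).2 = false then φ (fun i => (v i).1) else 0) =
      chainExp K μ n (fun v => φ v * ∏ i : Fin n, w (v i.castSucc)) := by
  have hf : MeasurableEmbedding (fun y : Y => (y, false)) :=
    measurableEmbedding_prod_mk_right false
  have hrange : range (fun y : Y => (y, false)) = univ ×ˢ {false} := by
    rw [prod_singleton, image_univ]
  have habsorb : ∀ z ∈ (range fun y : Y => (y, false))ᶜ,
      ∀ᵐ z' ∂Q z, z' ∈ (range fun y : Y => (y, false))ᶜ := by
    rintro ⟨y, _ | _⟩ hz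
    · exact absurd (mem_range_self y) hz
    · rw [hrange]
      exact measure_eq_zero_iff_ae_notMem.mp (hQ_coupled y)
  have hkilled (y : Y) : killedKernel Q hf y = w y • K y := by
    ext A hA
    rw [killedKernel_apply, hf.comap_apply, ← prod_singleton, hQ_uncoupled y A hA,
      Measure.smul_apply, smul_eq_mul]
  unfold chainExp
  rw [hf.lintegral_map]
  refine lintegral_congr fun y => ?_
  rw [kexp_eq_kexp_killedKernel hf habsorb, kexp_of_eq_smul hw hkilled]
  · simp only [Function.comp_apply, if_true]
  · intro v hv
    exact if_neg fun hlast => hv ⟨(v (Fin.last n)).1, Prod.ext rfl hlast.symm⟩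

/-- Lemma 1: for the coupled bell-variable chain,
`E_{ξ⊗ξ'⊗δ₀}[φ(X̄₀,…,X̄ₙ) 1(dₙ = 0)] = E*_{ξ⊗ξ'}[φ(X̄₀,…,X̄ₙ) (1-ε)^{N_{n-1}}]`. -/
theorem bell_chain_residual_identity
    {X : Type*} [MeasurableSpace X] (P : Kernel X X) [IsMarkovKernel P]
    -- (A1)
    (Cbar : Set (X × X)) (hCbar : MeasurableSet Cbar)
    (ε : ℝ) (hε0 : 0 < ε) (hε1 : ε < 1)
    (ν : X × X → Measure X) (hν : ∀ p ∈ Cbar, IsProbabilityMeasure (ν p))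
    (hminor : ∀ p ∈ Cbar, ∀ A : Set X, MeasurableSet A →
      ENNReal.ofReal ε * ν p A ≤ min (P p.1 A) (P p.2 A))
    -- the residual kernel R̄
    (Rbar : Kernel (X × X) (X × X)) [IsMarkovKernel Rbar]
    (hRbar1 : ∀ p ∈ Cbar, ∀ A : Set X, MeasurableSet A →
      ENNReal.ofReal (1 - ε) * Rbar p (A ×ˢ Set.univ) + ENNReal.ofReal ε * ν p A = P p.1 A)
    (hRbar2 : ∀ p ∈ Cbar, ∀ A : Set X, MeasurableSet A →
      ENNReal.ofReal (1 - ε) * Rbar p (Set.univ ×ˢ A) + ENNReal.ofReal ε * ν p A = P p.2 A)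
    -- the kernel P̄
    (Pbar : Kernel (X × X) (X × X)) [IsMarkovKernel Pbar]
    (hPbar1 : ∀ p ∈ Cbar, ∀ A A' : Set X, MeasurableSet A → MeasurableSet A' →
      Pbar p (A ×ˢ A') = ENNReal.ofReal (1 - ε) * Rbar p (A ×ˢ A') +
        ENNReal.ofReal ε * ν p (A ∩ A'))
    (hPbar2 : ∀ p ∉ Cbar, ∀ A : Set X, MeasurableSet A →
      Pbar p (A ×ˢ Set.univ) = P p.1 A ∧ Pbar p (Set.univ ×ˢ A) = P p.2 A)
    -- the kernel P*
    (Pstar : Kernel (X × X) (X × X))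
    (hPstar1 : ∀ p ∈ Cbar, Pstar p = Rbar p) (hPstar2 : ∀ p ∉ Cbar, Pstar p = Pbar p)
    -- the bell-variable chain: kernel Q on (X × X) × {0,1}, where `true` means coupled
    (Q : Kernel ((X × X) × Bool) ((X × X) × Bool)) [IsMarkovKernel Q]
    (hQ1 : ∀ x x' : X, Q ((x, x'), true) = (P x).map (fun y => ((y, y), true)))
    (hQ2 : ∀ p ∈ Cbar, Q (p, false) =
      ENNReal.ofReal ε • (ν p).map (fun y => ((y, y), true)) +
        ENNReal.ofReal (1 - ε) • (Rbar p).map (fun z => (z, false)))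
    (hQ3 : ∀ p ∉ Cbar, Q (p, false) = (Pbar p).map (fun z => (z, false)))
    (ξ ξ' : Measure X) [IsProbabilityMeasure ξ] [IsProbabilityMeasure ξ']
    (n : ℕ) (φ : (Fin (n + 1) → X × X) → ℝ≥0∞) (hφ : Measurable φ) :
    chainExp Q ((ξ.prod ξ').map (fun p => (p, false))) n
        (fun w => if (w (Fin.last n)).2 = false then φ (fun i => (w i).1) else 0) =
      chainExp Pstar (ξ.prod ξ') n
        (fun v => φ v * ENNReal.ofReal (1 - ε) ^
          (∑ i : Fin n, Set.indicator Cbar (fun _ => (1 : ℕ)) (v i.castSucc))) := by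
  simpa only [Finset.prod_pow_eq_pow_sum] using bell_chain_residual_identity_general
    (fun _ => ENNReal.pow_ne_top ENNReal.ofReal_ne_top) (bell_coupled_apply_uncoupled hQ1)
    (fun p A _ => bell_uncoupled_apply_uncoupled hPstar1 hPstar2 hQ2 hQ3 p A) (ξ.prod ξ') n φ
end

section
/- If ξ ⊗ ξ'(V̄) < ∞, then the process M_s := λ^{−s} B^{−N_{s−1}} (1−ε)^{N_{s−1}} V̄(X̄_s), s ≥ 0, is a supermartingale under P*_{ξ⊗ξ'} with respect to the natural filtration F_s = σ(X̄_0, …, X̄_s). -/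
/-!
Put `q = (1 - ε) / B` and `ρ = λ⁻¹ q ^ 1_{C̄}`. Then `M_s = ∏_{j < s} ρ(X̄_j) · V̄(X̄_s)`, and the
drift condition together with the choice of `B` gives `ρ · P*V̄ ≤ V̄` pointwise: off `C̄` this is
`P*V̄ ≤ λ V̄`, and on `C̄` it follows from `(1 - ε) λ⁻¹ R̄V̄ ≤ B` and `1 ≤ V̄`. Since the weight
`∏_{j ≤ s} ρ(X̄_j)` is known at time `s`, the Markov property bounds the conditional mean of
`M_{s+1}` by `M_s`. Running this argument with `ℝ≥0∞`-valued integrals also propagates the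
integrability of `M_0` to all later times.
-/

open MeasureTheory ProbabilityTheory Set
open scoped ENNReal

/-- The natural filtration of the coordinate process on path space `ℕ → Y`. -/
def coordFilt (Y : Type*) [MeasurableSpace Y] :
    Filtration ℕ (inferInstance : MeasurableSpace (ℕ → Y)) where
  seq s := ⨆ i ∈ Set.Iic s, MeasurableSpace.comap (fun ω : ℕ → Y => ω i) inferInstance
  mono' := by
    intro i j hij
    exact iSup_le fun k => iSup_le fun hk =>
      le_iSup_of_le k (le_iSup_of_le (Set.mem_Iic.mpr ((Set.mem_Iic.mp hk).trans hij)) le_rfl)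
  le' := by
    intro s
    exact iSup_le fun k => iSup_le fun _ => (measurable_pi_apply k).comap_le

/-- `N_{s-1}(ω) = ∑_{j=0}^{s-1} 1_{C̄}(X̄_j(ω))`. -/
noncomputable def Ncnt {Y : Type*} (Cbar : Set Y) (s : ℕ) (ω : ℕ → Y) : ℕ :=
  ∑ j ∈ Finset.range s, Set.indicator Cbar (fun _ => (1 : ℕ)) (ω j)

lemma supermartingale_of_setLIntegral_succ_le {Ω : Type*} {m : MeasurableSpace Ω} {μ : Measure Ω}
    [IsFiniteMeasure μ] {ℱ : Filtration ℕ m} {M : ℕ → Ω → ℝ} (hM : StronglyAdapted ℱ M)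
    (hM0 : ∀ s ω, 0 ≤ M s ω) (hinit : ∫⁻ ω, ENNReal.ofReal (M 0 ω) ∂μ ≠ ⊤)
    (hstep : ∀ s A, MeasurableSet[ℱ s] A →
      ∫⁻ ω in A, ENNReal.ofReal (M (s + 1) ω) ∂μ ≤ ∫⁻ ω in A, ENNReal.ofReal (M s ω) ∂μ) :
    Supermartingale M ℱ μ := by
  have hmeas s : AEStronglyMeasurable (M s) μ := ((hM s).mono (ℱ.le s)).aestronglyMeasurable
  have hfin s : ∫⁻ ω, ENNReal.ofReal (M s ω) ∂μ ≠ ⊤ := by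
    induction s with
    | zero => exact hinit
    | succ s ih =>
      exact ne_top_of_le_ne_top ih (by simpa using hstep s Set.univ MeasurableSet.univ)
  have hint s : Integrable (M s) μ :=
    (lintegral_ofReal_ne_top_iff_integrable (hmeas s) (.of_forall (hM0 s))).mp (hfin s)
  refine supermartingale_of_setIntegral_succ_le hM hint fun s A hA => ?_
  rw [integral_eq_lintegral_of_nonneg_ae (.of_forall (hM0 _)) (hmeas _).restrict,
    integral_eq_lintegral_of_nonneg_ae (.of_forall (hM0 _)) (hmeas _).restrict]
  exact ENNReal.toReal_mono (ne_top_of_le_ne_top (hfin s) (setLIntegral_le_lintegral _ _))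
    (hstep s A hA)

section MarkovChain

variable {Y : Type*} [MeasurableSpace Y]

lemma measurable_coordFilt_eval {i s : ℕ} (his : i ≤ s) :
    Measurable[coordFilt Y s] fun ω : ℕ → Y => ω i :=
  measurable_iff_comap_le.mpr <| le_iSup₂_of_le (f := fun i (_ : i ∈ Set.Iic s) =>
    MeasurableSpace.comap (fun ω : ℕ → Y => ω i) inferInstance) i his le_rfl

lemma measurable_coordFilt_prod_range {R : Type*} [CommMonoid R] [MeasurableSpace R]
    [MeasurableMul₂ R] {ρ : Y → R} (hρ : Measurable ρ) {s t : ℕ} (hts : t ≤ s + 1) :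
    Measurable[coordFilt Y s] fun ω : ℕ → Y => ∏ j ∈ Finset.range t, ρ (ω j) :=
  Finset.measurable_fun_prod _ fun _ hj => hρ.comp <|
    measurable_coordFilt_eval (Nat.le_of_lt_succ ((Finset.mem_range.mp hj).trans_le hts))

lemma coordFilt_le_comap_restrict (s : ℕ) :
    coordFilt Y s ≤
      MeasurableSpace.comap (fun (ω : ℕ → Y) (i : Fin (s + 1)) => ω i) inferInstance := by
  refine iSup₂_le fun k hk => measurable_iff_comap_le.mp ?_
  exact (measurable_pi_apply (X := fun _ => Y) (⟨k, Nat.lt_succ_of_le hk⟩ : Fin (s + 1))).comp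
    (comap_measurable _)

lemma exists_eq_comp_restrict_of_measurable_coordFilt {Z : Type*} [Nonempty Z] [MeasurableSpace Z]
    [StandardBorelSpace Z] {s : ℕ} {f : (ℕ → Y) → Z} (hf : Measurable[coordFilt Y s] f) :
    ∃ g : (Fin (s + 1) → Y) → Z, Measurable g ∧ f = fun ω => g fun i => ω i :=
  (hf.mono (coordFilt_le_comap_restrict s) le_rfl).exists_eq_measurable_comp

lemma kexp_succ_eq_kexp_lintegral_snoc (κ : Kernel Y Y) (n : ℕ) (y : Y)
    (φ : (Fin (n + 2) → Y) → ℝ≥0∞) :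
    kexp κ (n + 1) y φ =
      kexp κ n y fun v => ∫⁻ z, φ (Fin.snoc (α := fun _ => Y) v z) ∂κ (v (Fin.last n)) := by
  induction n generalizing y with
  | zero =>
    refine lintegral_congr fun z => congrArg φ ?_
    ext i
    fin_cases i <;> rfl
  | succ n ih =>
    calc kexp κ (n + 2) y φ
        = ∫⁻ y', kexp κ (n + 1) y' (fun v => φ (Fin.cons y v)) ∂κ y := rfl
      _ = ∫⁻ y', kexp κ n y' (fun v => ∫⁻ z, φ (Fin.cons y (Fin.snoc (α := fun _ => Y) v z))
            ∂κ (v (Fin.last n))) ∂κ y := lintegral_congr fun y' => ih y' _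
      _ = kexp κ (n + 1) y fun v =>
            ∫⁻ z, φ (Fin.snoc (α := fun _ => Y) v z) ∂κ (v (Fin.last (n + 1))) := by
        simp only [kexp, Fin.cons_snoc_eq_snoc_cons, ← Fin.succ_last, Fin.cons_succ]

/-- `ℙc` is the law on path space of the Markov chain with initial distribution `μ` and transition
kernel `κ`, encoded by its finite-dimensional distributions. -/
def IsChainLaw (κ : Kernel Y Y) (μ : Measure Y) (ℙc : Measure (ℕ → Y)) : Prop :=
  ∀ (n : ℕ) (φ : (Fin (n + 1) → Y) → ℝ≥0∞), Measurable φ →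
    ∫⁻ ω, φ (fun i => ω i) ∂ℙc = chainExp κ μ n φ

namespace IsChainLaw

variable {κ : Kernel Y Y} {μ : Measure Y} {ℙc : Measure (ℕ → Y)}

lemma lintegral_eval_zero (h : IsChainLaw κ μ ℙc) {g : Y → ℝ≥0∞} (hg : Measurable g) :
    ∫⁻ ω, g (ω 0) ∂ℙc = ∫⁻ y, g y ∂μ :=
  h 0 (fun v => g (v 0)) (hg.comp (measurable_pi_apply 0))

lemma lintegral_mul_eval_succ (h : IsChainLaw κ μ ℙc) {n : ℕ} {f : (ℕ → Y) → ℝ≥0∞}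
    (hf : Measurable[coordFilt Y n] f) {g : Y → ℝ≥0∞} (hg : Measurable g) :
    ∫⁻ ω, f ω * g (ω (n + 1)) ∂ℙc = ∫⁻ ω, f ω * ∫⁻ z, g z ∂κ (ω n) ∂ℙc := by
  have hκg : Measurable fun y => ∫⁻ z, g z ∂κ y := hg.lintegral_kernel
  obtain ⟨φ, hφ, rfl⟩ := exists_eq_comp_restrict_of_measurable_coordFilt hf
  calc ∫⁻ ω, φ (fun i => ω i) * g (ω (n + 1)) ∂ℙc
      = chainExp κ μ (n + 1) fun v => φ (Fin.init (α := fun _ => Y) v) * g (v (Fin.last _)) :=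
        h (n + 1) (fun v => φ (Fin.init (α := fun _ => Y) v) * g (v (Fin.last _)))
          (by unfold Fin.init; fun_prop)
    _ = chainExp κ μ n fun v => φ v * ∫⁻ z, g z ∂κ (v (Fin.last n)) :=
        lintegral_congr fun y => by
          simp only [kexp_succ_eq_kexp_lintegral_snoc, Fin.init_snoc, Fin.snoc_last,
            lintegral_const_mul _ hg]
    _ = ∫⁻ ω, φ (fun i => ω i) * ∫⁻ z, g z ∂κ (ω n) ∂ℙc :=
        (h n (fun v => φ v * ∫⁻ z, g z ∂κ (v (Fin.last n)))
          (hφ.mul (hκg.comp (measurable_pi_apply _)))).symm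

lemma setLIntegral_prod_mul_succ_le (h : IsChainLaw κ μ ℙc) {ρ V : Y → ℝ≥0∞} (hρ : Measurable ρ)
    (hV : Measurable V) (hρV : ∀ y, ρ y * ∫⁻ z, V z ∂κ y ≤ V y) {s : ℕ} {A : Set (ℕ → Y)}
    (hA : MeasurableSet[coordFilt Y s] A) :
    ∫⁻ ω in A, (∏ j ∈ Finset.range (s + 1), ρ (ω j)) * V (ω (s + 1)) ∂ℙc ≤
      ∫⁻ ω in A, (∏ j ∈ Finset.range s, ρ (ω j)) * V (ω s) ∂ℙc := by
  have hA' : MeasurableSet A := (coordFilt Y).le s A hA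
  have hweight : Measurable[coordFilt Y s]
      (A.indicator fun ω => ∏ j ∈ Finset.range (s + 1), ρ (ω j)) :=
    (measurable_coordFilt_prod_range hρ le_rfl).indicator hA
  have setLIntegral_mul (f g : (ℕ → Y) → ℝ≥0∞) :
      ∫⁻ ω in A, f ω * g ω ∂ℙc = ∫⁻ ω, A.indicator f ω * g ω ∂ℙc := by
    simp only [← lintegral_indicator hA', Set.indicator_mul_left]
  calc ∫⁻ ω in A, (∏ j ∈ Finset.range (s + 1), ρ (ω j)) * V (ω (s + 1)) ∂ℙc
      = ∫⁻ ω in A, (∏ j ∈ Finset.range (s + 1), ρ (ω j)) * ∫⁻ z, V z ∂κ (ω s) ∂ℙc := by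
        rw [setLIntegral_mul, setLIntegral_mul, h.lintegral_mul_eval_succ hweight hV]
    _ ≤ ∫⁻ ω in A, (∏ j ∈ Finset.range s, ρ (ω j)) * V (ω s) ∂ℙc := by
        simp only [Finset.prod_range_succ, mul_assoc]
        gcongr with ω
        exact hρV (ω s)

theorem supermartingale_prod_mul [IsFiniteMeasure ℙc] (h : IsChainLaw κ μ ℙc) {ρ V : Y → ℝ}
    (hρ : Measurable ρ) (hρ0 : ∀ y, 0 ≤ ρ y) (hV : Measurable V) (hV0 : ∀ y, 0 ≤ V y)
    (hVμ : ∫⁻ y, ENNReal.ofReal (V y) ∂μ ≠ ⊤)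
    (hρV : ∀ y, ENNReal.ofReal (ρ y) * ∫⁻ z, ENNReal.ofReal (V z) ∂κ y ≤ ENNReal.ofReal (V y)) :
    Supermartingale (fun s ω => (∏ j ∈ Finset.range s, ρ (ω j)) * V (ω s)) (coordFilt Y) ℙc := by
  have hprod0 s (ω : ℕ → Y) : 0 ≤ ∏ j ∈ Finset.range s, ρ (ω j) :=
    Finset.prod_nonneg fun j _ => hρ0 (ω j)
  have hadapted s : Measurable[coordFilt Y s]
      fun ω : ℕ → Y => (∏ j ∈ Finset.range s, ρ (ω j)) * V (ω s) :=
    (measurable_coordFilt_prod_range hρ s.le_succ).mul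
      (hV.comp (measurable_coordFilt_eval le_rfl))
  refine supermartingale_of_setLIntegral_succ_le (fun s => (hadapted s).stronglyMeasurable)
    (fun s ω => mul_nonneg (hprod0 s ω) (hV0 _)) ?_ fun s A hA => ?_
  · simpa [h.lintegral_eval_zero hV.ennreal_ofReal] using hVμ
  · simpa only [ENNReal.ofReal_mul (hprod0 _ _),
      ENNReal.ofReal_prod_of_nonneg fun _ _ => hρ0 _] using
      h.setLIntegral_prod_mul_succ_le hρ.ennreal_ofReal hV.ennreal_ofReal hρV hA

end IsChainLaw

end MarkovChain

lemma prod_mul_pow_indicator {Y R : Type*} [CommMonoid R] (a q : R) (C : Set Y) (s : ℕ)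
    (ω : ℕ → Y) :
    ∏ j ∈ Finset.range s, a * q ^ C.indicator (fun _ => (1 : ℕ)) (ω j) =
      a ^ s * q ^ Ncnt C s ω := by
  rw [Finset.prod_mul_distrib, Finset.prod_const, Finset.card_range, Finset.prod_pow_eq_pow_sum,
    Ncnt]

lemma ofReal_mul_lintegral_le_of_drift {Y : Type*} [MeasurableSpace Y] {κ : Kernel Y Y} {C : Set Y}
    {V : Y → ℝ} {r lam S B : ℝ} (hr : 0 ≤ r) (hlam : 0 < lam) (hB : 0 < B)
    (hSB : r * lam⁻¹ * S ≤ B) (hV1 : ∀ y ∈ C, 1 ≤ V y)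
    (hdrift : ∀ y ∉ C, ∫⁻ z, ENNReal.ofReal (V z) ∂κ y ≤ ENNReal.ofReal (lam * V y))
    (hS : ∀ y ∈ C, ∫⁻ z, ENNReal.ofReal (V z) ∂κ y ≤ ENNReal.ofReal S) (y : Y) :
    ENNReal.ofReal (lam⁻¹ * (r / B) ^ C.indicator (fun _ => (1 : ℕ)) y) *
      ∫⁻ z, ENNReal.ofReal (V z) ∂κ y ≤ ENNReal.ofReal (V y) := by
  by_cases hy : y ∈ C
  · have hle : lam⁻¹ * (r / B) * S ≤ V y :=
      calc lam⁻¹ * (r / B) * S = r * lam⁻¹ * S / B := by ring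
        _ ≤ 1 := (div_le_one hB).mpr hSB
        _ ≤ V y := hV1 y hy
    simp only [Set.indicator_of_mem hy, pow_one]
    grw [hS y hy, ← ENNReal.ofReal_mul (by positivity), hle]
  · simp only [Set.indicator_of_notMem hy, pow_zero, mul_one]
    grw [hdrift y hy, ← ENNReal.ofReal_mul (by positivity), inv_mul_cancel_left₀ hlam.ne']

theorem supermartingale_drift_process_general
    {Y : Type*} [MeasurableSpace Y] {κ : Kernel Y Y} {C : Set Y} (hC : MeasurableSet C)
    {ε lam : ℝ} (hε : ε ≤ 1) (hlam : 0 < lam)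
    {V : Y → ℝ} (hV : Measurable V) (hV0 : ∀ y, 0 ≤ V y) (hV1 : ∀ y ∈ C, 1 ≤ V y)
    (hdrift : ∀ y ∉ C, ∫⁻ z, ENNReal.ofReal (V z) ∂κ y ≤ ENNReal.ofReal (lam * V y))
    (hfin : ∀ y ∈ C, ∫⁻ z, ENNReal.ofReal (V z) ∂κ y ≠ ⊤)
    (hbdd : BddAbove ((fun y => (∫⁻ z, ENNReal.ofReal (V z) ∂κ y).toReal) '' C))
    {μ : Measure Y} (hVμ : ∫⁻ y, ENNReal.ofReal (V y) ∂μ ≠ ⊤)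
    {ℙc : Measure (ℕ → Y)} [IsFiniteMeasure ℙc] (hℙc : IsChainLaw κ μ ℙc) :
    Supermartingale
      (fun (s : ℕ) (ω : ℕ → Y) =>
        (lam ^ s)⁻¹ *
          ((max 1 ((1 - ε) * lam⁻¹ *
              sSup ((fun y => (∫⁻ z, ENNReal.ofReal (V z) ∂κ y).toReal) '' C)))
            ^ (Ncnt C s ω))⁻¹ *
          (1 - ε) ^ (Ncnt C s ω) * V (ω s))
      (coordFilt Y) ℙc := by
  set S := sSup ((fun y => (∫⁻ z, ENNReal.ofReal (V z) ∂κ y).toReal) '' C)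
  set B := max 1 ((1 - ε) * lam⁻¹ * S)
  have hB : 0 < B := one_pos.trans_le (le_max_left _ _)
  have hr : 0 ≤ 1 - ε := sub_nonneg.mpr hε
  have hS y (hy : y ∈ C) : ∫⁻ z, ENNReal.ofReal (V z) ∂κ y ≤ ENNReal.ofReal S := by
    rw [← ENNReal.ofReal_toReal (hfin y hy)]
    exact ENNReal.ofReal_le_ofReal (le_csSup hbdd ⟨y, hy, rfl⟩)
  have hweight : Measurable fun y => lam⁻¹ * ((1 - ε) / B) ^ C.indicator (fun _ => (1 : ℕ)) y :=
    measurable_const.mul (measurable_const.pow (measurable_const.indicator hC))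
  convert hℙc.supermartingale_prod_mul hweight (fun y => by positivity) hV hV0 hVμ
    (ofReal_mul_lintegral_le_of_drift hr hlam hB (le_max_right _ _) hV1 hdrift hS) using 3 with s ω
  rw [prod_mul_pow_indicator, inv_pow, div_pow]
  ring

/-- If `ξ ⊗ ξ'(V̄) < ∞`, the process `M_s = λ^{-s} B^{-N_{s-1}} (1-ε)^{N_{s-1}} V̄(X̄_s)` is a
supermartingale under `P*_{ξ⊗ξ'}` with respect to the natural filtration, where
`B = max(1, (1-ε) λ⁻¹ sup_{C̄} R̄V̄)`. -/
theorem supermartingale_drift_process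
    {X : Type*} [MeasurableSpace X] (P : Kernel X X) [IsMarkovKernel P]
    -- (A1)
    (Cbar : Set (X × X)) (hCbar : MeasurableSet Cbar)
    (ε : ℝ) (hε0 : 0 < ε) (hε1 : ε < 1)
    (ν : X × X → Measure X) (hν : ∀ p ∈ Cbar, IsProbabilityMeasure (ν p))
    (hminor : ∀ p ∈ Cbar, ∀ A : Set X, MeasurableSet A →
      ENNReal.ofReal ε * ν p A ≤ min (P p.1 A) (P p.2 A))
    -- the residual kernel R̄
    (Rbar : Kernel (X × X) (X × X)) [IsMarkovKernel Rbar]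
    (hRbar1 : ∀ p ∈ Cbar, ∀ A : Set X, MeasurableSet A →
      ENNReal.ofReal (1 - ε) * Rbar p (A ×ˢ Set.univ) + ENNReal.ofReal ε * ν p A = P p.1 A)
    (hRbar2 : ∀ p ∈ Cbar, ∀ A : Set X, MeasurableSet A →
      ENNReal.ofReal (1 - ε) * Rbar p (Set.univ ×ˢ A) + ENNReal.ofReal ε * ν p A = P p.2 A)
    -- the kernel P̄
    (Pbar : Kernel (X × X) (X × X)) [IsMarkovKernel Pbar]
    (hPbar2 : ∀ p ∉ Cbar, ∀ A : Set X, MeasurableSet A →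
      Pbar p (A ×ˢ Set.univ) = P p.1 A ∧ Pbar p (Set.univ ×ˢ A) = P p.2 A)
    -- the kernel P*
    (Pstar : Kernel (X × X) (X × X))
    (hPstar1 : ∀ p ∈ Cbar, Pstar p = Rbar p) (hPstar2 : ∀ p ∉ Cbar, Pstar p = Pbar p)
    -- (A2)
    (Vbar : X × X → ℝ) (hVbar1 : ∀ p, 1 ≤ Vbar p) (hVbarm : Measurable Vbar)
    (lam b : ℝ) (hlam0 : 0 < lam) (hlam1 : lam < 1)
    (hdrift : ∀ p, ∫⁻ z, ENNReal.ofReal (Vbar z) ∂(Pstar p) ≤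
      ENNReal.ofReal (lam * Vbar p + Set.indicator Cbar (fun _ => b) p))
    -- sup_{(x,x') ∈ C̄} R̄V̄(x,x') < ∞
    (hRVfin : ∀ p ∈ Cbar, ∫⁻ z, ENNReal.ofReal (Vbar z) ∂(Rbar p) ≠ ⊤)
    (hRVbdd : BddAbove ((fun p => (∫⁻ z, ENNReal.ofReal (Vbar z) ∂(Rbar p)).toReal) '' Cbar))
    -- initial distributions with ξ ⊗ ξ'(V̄) < ∞
    (ξ ξ' : Measure X) [IsProbabilityMeasure ξ] [IsProbabilityMeasure ξ']
    (hVint : ∫⁻ p, ENNReal.ofReal (Vbar p) ∂(ξ.prod ξ') ≠ ⊤)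
    -- ℙ is the law P*_{ξ⊗ξ'} of the chain with kernel P* and initial law ξ ⊗ ξ',
    -- characterized through its finite-dimensional distributions
    (ℙc : Measure (ℕ → X × X)) [IsProbabilityMeasure ℙc]
    (hℙc : ∀ (n : ℕ) (φ : (Fin (n + 1) → X × X) → ℝ≥0∞), Measurable φ →
      ∫⁻ ω, φ (fun i => ω i) ∂ℙc = chainExp Pstar (ξ.prod ξ') n φ) :
    Supermartingale
      (fun (s : ℕ) (ω : ℕ → X × X) =>
        (lam ^ s)⁻¹ *
          ((max 1 ((1 - ε) * lam⁻¹ *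
              sSup ((fun p => (∫⁻ z, ENNReal.ofReal (Vbar z) ∂(Rbar p)).toReal) '' Cbar)))
            ^ (Ncnt Cbar s ω))⁻¹ *
          (1 - ε) ^ (Ncnt Cbar s ω) * Vbar (ω s))
      (coordFilt (X × X)) ℙc := by
  have hS : (fun p => (∫⁻ z, ENNReal.ofReal (Vbar z) ∂(Rbar p)).toReal) '' Cbar =
      (fun p => (∫⁻ z, ENNReal.ofReal (Vbar z) ∂(Pstar p)).toReal) '' Cbar :=
    Set.image_congr fun p hp => by rw [hPstar1 p hp]
  rw [hS] at hRVbdd ⊢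
  exact supermartingale_drift_process_general hCbar hε1.le hlam0 hVbarm
    (fun p => zero_le_one.trans (hVbar1 p)) (fun p _ => hVbar1 p)
    (fun p hp => by simpa [hp] using hdrift p) (fun p hp => hPstar1 p hp ▸ hRVfin p hp)
    hRVbdd hVint hℙc
end

section
/- Let f : X → [1,∞) be a measurable function with f(x) + f(x') ≤ 2 V̄(x,x') for all (x,x') ∈ X × X. Then for all n ≥ 1, all j ∈ {1, …, n+1}, and all probability measures ξ, ξ' on X: (i) ‖ξP^n − ξ'P^n‖_TV ≤ 2(1−ε)^j 1(j ≤ n) + 2 λ^n B^{j−1} (ξ⊗ξ')(V̄), and (ii) ‖ξP^n − ξ'P^n‖_f ≤ 2(1−ε)^j (b(1−λ)^{-1} + λ^n (ξ⊗ξ')(V̄)) 1(j ≤ n) + 2 λ^n B^{j−1} (ξ⊗ξ')(V̄). -/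
/-!
Run two copies of the chain together until they couple. The law of the pair before coupling is
propagated by the sub-Markov kernel `T` equal to `P*` off `C̄` and to `(1 - ε) P*` on `C̄`, while
the mass that couples in a step contributes the same measure to both coordinates. Hence `ξPⁿ` and
`ξ'Pⁿ` are the marginals of `(ξ ⊗ ξ')Tⁿ` plus a common measure, which cancels in their difference,
and it remains to bound `Tⁿ W` for `W = 1` and `W = V̄`.

For this, split the paths of `P*` according to their number of visits to `C̄`. Those with at least
`j` visits carry a factor `(1 - ε)^j`, and along them `P*ⁿ W` is `1` or is bounded by the drift
condition. Along the others `W ≤ V̄` is contracted by `λ` at each step, up to a factor `B` for each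
of the at most `j - 1` visits.
-/

open MeasureTheory ProbabilityTheory Set
open scoped ENNReal

/-- The `f`-total variation distance between two measures:
`‖μ - ν‖_f = sup_{|φ| ≤ f} |μ(φ) - ν(φ)|`. -/
noncomputable def fDist {X : Type*} [MeasurableSpace X] (f : X → ℝ) (μ ν : Measure X) : ℝ≥0∞ :=
  ⨆ (φ : X → ℝ) (_ : Measurable φ) (_ : ∀ x, |φ x| ≤ f x) (_ : Integrable φ μ)
    (_ : Integrable φ ν), ENNReal.ofReal |∫ x, φ x ∂μ - ∫ x, φ x ∂ν|

/-- `iterMeas P ξ n = ξ Pⁿ`, the distribution after `n` steps of the kernel `P` started at `ξ`. -/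
noncomputable def iterMeas {X : Type*} [MeasurableSpace X] (P : Kernel X X) (ξ : Measure X) :
    ℕ → Measure X
  | 0 => ξ
  | n + 1 => (iterMeas P ξ n).bind (fun x => P x)


section FDist

variable {X : Type*} [MeasurableSpace X] (g : X → ℝ)

lemma fDist_add_add_le (μ μ' ρ : Measure X) : fDist g (μ + ρ) (μ' + ρ) ≤ fDist g μ μ' := by
  refine iSup₂_le fun φ hφ => iSup₂_le fun hφg hi => iSup_le fun hi' => ?_
  rw [integral_add_measure hi.left_of_add_measure hi.right_of_add_measure,
    integral_add_measure hi'.left_of_add_measure hi'.right_of_add_measure,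
    add_sub_add_right_eq_sub]
  exact le_iSup₂_of_le φ hφ <| le_iSup₂_of_le hφg hi.left_of_add_measure <|
    le_iSup_of_le hi'.left_of_add_measure le_rfl

lemma fDist_fst_snd_le (γ : Measure (X × X)) :
    fDist g γ.fst γ.snd ≤ ∫⁻ p, ENNReal.ofReal (g p.1 + g p.2) ∂γ := by
  refine iSup₂_le fun φ _ => iSup₂_le fun hφg hi => iSup_le fun hi' => ?_
  have hdiff : ∫ x, φ x ∂γ.fst - ∫ x, φ x ∂γ.snd = ∫ p, (φ p.1 - φ p.2) ∂γ := by
    rw [Measure.fst, Measure.snd, integral_map measurable_fst.aemeasurable hi.1,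
      integral_map measurable_snd.aemeasurable hi'.1]
    exact (integral_sub (hi.comp_measurable measurable_fst)
      (hi'.comp_measurable measurable_snd)).symm
  rw [hdiff, ← Real.enorm_eq_ofReal_abs]
  refine (enorm_integral_le_lintegral_enorm _).trans (lintegral_mono fun p => ?_)
  rw [Real.enorm_eq_ofReal_abs]
  exact ENNReal.ofReal_le_ofReal ((abs_sub _ _).trans (add_le_add (hφg _) (hφg _)))

end FDist

section KernelPow

variable {Y : Type*} [MeasurableSpace Y]

lemma iterMeas_eq_pow_bind (κ : Kernel Y Y) (μ : Measure Y) (n : ℕ) :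
    iterMeas κ μ n = μ.bind (κ ^ n) := by
  induction n with
  | zero => exact Measure.id_comp.symm
  | succ n ih =>
    rw [iterMeas, ih, pow_succ']
    exact Measure.comp_assoc

lemma isMarkovKernel_pow (κ : Kernel Y Y) [IsMarkovKernel κ] (n : ℕ) : IsMarkovKernel (κ ^ n) := by
  induction n with
  | zero => exact inferInstanceAs (IsMarkovKernel Kernel.id)
  | succ n ih =>
    rw [pow_succ]
    exact inferInstanceAs (IsMarkovKernel ((κ ^ n) ∘ₖ κ))

lemma lintegral_pow_succ (κ : Kernel Y Y) {W : Y → ℝ≥0∞} (hW : Measurable W) (n : ℕ) (y : Y) :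
    ∫⁻ z, W z ∂(κ ^ (n + 1)) y = ∫⁻ x, ∫⁻ z, W z ∂(κ ^ n) x ∂κ y := by
  rw [pow_succ]
  exact Kernel.lintegral_comp _ _ _ hW

lemma lintegral_pow_succ' (κ : Kernel Y Y) {W : Y → ℝ≥0∞} (hW : Measurable W) (n : ℕ) (y : Y) :
    ∫⁻ z, W z ∂(κ ^ (n + 1)) y = ∫⁻ x, ∫⁻ z, W z ∂κ x ∂(κ ^ n) y := by
  rw [pow_succ']
  exact Kernel.lintegral_comp _ _ _ hW

lemma lintegral_pow_mono {κ η : Kernel Y Y} (h : κ ≤ η) {W : Y → ℝ≥0∞} (hW : Measurable W)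
    (n : ℕ) (y : Y) : ∫⁻ z, W z ∂(κ ^ n) y ≤ ∫⁻ z, W z ∂(η ^ n) y := by
  induction n generalizing y with
  | zero => rfl
  | succ n ih =>
    rw [lintegral_pow_succ κ hW, lintegral_pow_succ η hW]
    exact lintegral_mono' (h y) ih

lemma lintegral_pow_le_of_drift (Q : Kernel Y Y) [IsMarkovKernel Q] {V : Y → ℝ≥0∞}
    (hV : Measurable V) {l c K : ℝ≥0∞} (hdrift : ∀ y, ∫⁻ z, V z ∂Q y ≤ l * V y + c)
    (hK : l * K + c ≤ K) (n : ℕ) (y : Y) : ∫⁻ z, V z ∂(Q ^ n) y ≤ K + l ^ n * V y := by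
  induction n with
  | zero =>
    rw [pow_zero, pow_zero, one_mul]
    exact (lintegral_dirac' y hV).trans_le le_add_self
  | succ n ih =>
    have := isMarkovKernel_pow Q n
    calc ∫⁻ z, V z ∂(Q ^ (n + 1)) y
        = ∫⁻ x, ∫⁻ z, V z ∂Q x ∂(Q ^ n) y := lintegral_pow_succ' Q hV n y
      _ ≤ ∫⁻ x, (l * V x + c) ∂(Q ^ n) y := lintegral_mono hdrift
      _ = l * ∫⁻ x, V x ∂(Q ^ n) y + c := by
          rw [lintegral_add_right _ measurable_const, lintegral_const_mul _ hV, lintegral_const,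
            measure_univ, mul_one]
      _ ≤ l * (K + l ^ n * V y) + c := by gcongr
      _ = (l * K + c) + l ^ (n + 1) * V y := by ring
      _ ≤ K + l ^ (n + 1) * V y := by gcongr

lemma lintegral_lintegral_pow_le_of_drift (Q : Kernel Y Y) [IsMarkovKernel Q] {V : Y → ℝ≥0∞}
    (hV : Measurable V) {l c K : ℝ≥0∞} (hdrift : ∀ y, ∫⁻ z, V z ∂Q y ≤ l * V y + c)
    (hK : l * K + c ≤ K) (n : ℕ) (μ : Measure Y) [IsProbabilityMeasure μ] :
    ∫⁻ y, ∫⁻ z, V z ∂(Q ^ n) y ∂μ ≤ K + l ^ n * ∫⁻ y, V y ∂μ :=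
  calc ∫⁻ y, ∫⁻ z, V z ∂(Q ^ n) y ∂μ
      ≤ ∫⁻ y, (K + l ^ n * V y) ∂μ :=
        lintegral_mono (lintegral_pow_le_of_drift Q hV hdrift hK n)
    _ = K + l ^ n * ∫⁻ y, V y ∂μ := by
        rw [lintegral_add_left measurable_const, lintegral_const, measure_univ, mul_one,
          lintegral_const_mul _ hV]

end KernelPow

section PartialCoupling

variable {X Y : Type*} [MeasurableSpace X] [MeasurableSpace Y]

lemma map_comp_add_eq_comap_comp {P P' : Kernel X X} {T T' : Kernel Y Y} {N N' : Kernel Y X}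
    {π : Y → X} {hπ : Measurable π} (h : T.map π + N = P.comap π hπ)
    (h' : T'.map π + N' = P'.comap π hπ) :
    (T ∘ₖ T').map π + (N ∘ₖ T' + P ∘ₖ N') = (P ∘ₖ P').comap π hπ :=
  calc (T ∘ₖ T').map π + (N ∘ₖ T' + P ∘ₖ N')
      = (T.map π + N) ∘ₖ T' + P ∘ₖ N' := by
        rw [Kernel.map_comp, Kernel.comp_add_left, add_assoc]
    _ = P ∘ₖ (T'.map π + N') := by rw [h, ← Kernel.comp_map _ _ hπ, Kernel.comp_add_right]
    _ = (P ∘ₖ P').comap π hπ := by rw [h']; rfl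

lemma bind_map_eq_bind_comap (κ : Kernel X X) (μ : Measure Y) {π : Y → X} (hπ : Measurable π) :
    (μ.map π).bind κ = μ.bind (κ.comap π hπ) := by
  ext s hs
  rw [Measure.bind_apply hs κ.aemeasurable, Measure.bind_apply hs (Kernel.aemeasurable _),
    lintegral_map (κ.measurable_coe hs) hπ]
  rfl

lemma measurable_of_add_eq {κ η : Kernel Y X} [IsFiniteKernel η] {ν : Y → Measure X}
    (h : ∀ y, κ y + ν y = η y) : Measurable ν := by
  refine Measure.measurable_of_measurable_coe _ fun s hs => ?_
  have hsub : (fun y => ν y s) = fun y => η y s - κ y s := by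
    funext y
    have hadd : κ y s + ν y s = η y s := by rw [← h y, Measure.add_apply]
    have hκ : κ y s ≠ ∞ := ne_top_of_le_ne_top (measure_ne_top (η y) s) (hadd ▸ le_self_add)
    rw [← hadd, ENNReal.add_sub_cancel_left hκ]
  rw [hsub]
  exact (η.measurable_coe hs).sub (κ.measurable_coe hs)

/-- A coupling of two copies of the chain `P` seen up to the coupling time: from `p`, the pair
either moves without coupling, according to the sub-Markov kernel `T`, or couples, the common new
position having (sub-probability) law `N p`. -/
structure IsPartialCoupling (P : Kernel X X) (T : Kernel (X × X) (X × X)) (N : Kernel (X × X) X) :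
    Prop where
  map_fst_add : T.map Prod.fst + N = P.comap Prod.fst measurable_fst
  map_snd_add : T.map Prod.snd + N = P.comap Prod.snd measurable_snd

lemma exists_isPartialCoupling {P : Kernel X X} [IsFiniteKernel P] {T : Kernel (X × X) (X × X)}
    {ν : X × X → Measure X} (hfst : ∀ p, (T p).map Prod.fst + ν p = P p.1)
    (hsnd : ∀ p, (T p).map Prod.snd + ν p = P p.2) : ∃ N, IsPartialCoupling P T N := by
  have hfst' (p : X × X) : T.map Prod.fst p + ν p =
      (P.comap Prod.fst measurable_fst : Kernel (X × X) X) p := by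
    rw [Kernel.map_apply _ measurable_fst, hfst, Kernel.comap_apply]
  have hsnd' (p : X × X) : T.map Prod.snd p + ν p =
      (P.comap Prod.snd measurable_snd : Kernel (X × X) X) p := by
    rw [Kernel.map_apply _ measurable_snd, hsnd, Kernel.comap_apply]
  exact ⟨⟨ν, measurable_of_add_eq hfst'⟩, DFunLike.ext _ _ hfst', DFunLike.ext _ _ hsnd'⟩

namespace IsPartialCoupling

variable {P : Kernel X X} {T : Kernel (X × X) (X × X)} {N : Kernel (X × X) X}

lemma exists_pow (h : IsPartialCoupling P T N) (n : ℕ) :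
    ∃ N', IsPartialCoupling (P ^ n) (T ^ n) N' := by
  induction n with
  | zero =>
    refine ⟨0, ?_, ?_⟩ <;> rw [add_zero, pow_zero, pow_zero]
    · exact (Kernel.id_map measurable_fst).trans (Kernel.id_comap measurable_fst).symm
    · exact (Kernel.id_map measurable_snd).trans (Kernel.id_comap measurable_snd).symm
  | succ n ih =>
    obtain ⟨N', hN'⟩ := ih
    refine ⟨N' ∘ₖ T + (P ^ n) ∘ₖ N, ?_, ?_⟩ <;> rw [pow_succ, pow_succ]
    · exact map_comp_add_eq_comap_comp hN'.map_fst_add h.map_fst_add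
    · exact map_comp_add_eq_comap_comp hN'.map_snd_add h.map_snd_add

lemma fDist_bind_le (h : IsPartialCoupling P T N) (g : X → ℝ) (γ : Measure (X × X)) :
    fDist g (γ.fst.bind P) (γ.snd.bind P) ≤
      ∫⁻ p, ENNReal.ofReal (g p.1 + g p.2) ∂(γ.bind T) := by
  have hfst : γ.fst.bind P = (γ.bind T).fst + γ.bind N := by
    rw [Measure.fst, bind_map_eq_bind_comap P γ measurable_fst, ← h.map_fst_add, Measure.add_comp,
      ← Measure.map_comp γ T measurable_fst, Measure.fst]
  have hsnd : γ.snd.bind P = (γ.bind T).snd + γ.bind N := by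
    rw [Measure.snd, bind_map_eq_bind_comap P γ measurable_snd, ← h.map_snd_add, Measure.add_comp,
      ← Measure.map_comp γ T measurable_snd, Measure.snd]
  rw [hfst, hsnd]
  exact (fDist_add_add_le g _ _ _).trans (fDist_fst_snd_le g _)

lemma fDist_iterMeas_le (h : IsPartialCoupling P T N) {g : X → ℝ} {W : X × X → ℝ≥0∞}
    (hW : Measurable W) (hg : ∀ x x', ENNReal.ofReal (g x + g x') ≤ 2 * W (x, x'))
    (γ : Measure (X × X)) (n : ℕ) :
    fDist g (iterMeas P γ.fst n) (iterMeas P γ.snd n) ≤ 2 * ∫⁻ p, ∫⁻ z, W z ∂(T ^ n) p ∂γ := by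
  obtain ⟨N', hN'⟩ := h.exists_pow n
  rw [iterMeas_eq_pow_bind, iterMeas_eq_pow_bind]
  calc fDist g (γ.fst.bind ⇑(P ^ n)) (γ.snd.bind ⇑(P ^ n))
      ≤ ∫⁻ p, ENNReal.ofReal (g p.1 + g p.2) ∂(γ.bind ⇑(T ^ n)) := hN'.fDist_bind_le g γ
    _ ≤ ∫⁻ p, 2 * W p ∂(γ.bind ⇑(T ^ n)) := lintegral_mono fun p => hg p.1 p.2
    _ = 2 * ∫⁻ p, ∫⁻ z, W z ∂(T ^ n) p ∂γ := by
        rw [lintegral_const_mul _ hW,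
          Measure.lintegral_bind (Kernel.aemeasurable _) hW.aemeasurable]

end IsPartialCoupling

end PartialCoupling

section DampedKernel

variable {Y : Type*} [MeasurableSpace Y] {C : Set Y}

open Classical in
/-- The kernel `Q` with its mass multiplied by `e` at the points of `C`: when coupling is attempted
on `C` and succeeds with probability `1 - e`, it is the kernel of the uncoupled pair. -/
noncomputable def dampedKernel (hC : MeasurableSet C) (e : ℝ≥0∞) (Q : Kernel Y Y) :
    Kernel Y Y where
  toFun y := if y ∈ C then e • Q y else Q y
  measurable' := Measurable.ite hC
    (Measure.measurable_of_measurable_coe _ fun _ hs => (Q.measurable_coe hs).const_mul e)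
    Q.measurable

variable {hC : MeasurableSet C} {e : ℝ≥0∞} {Q : Kernel Y Y} {y : Y}

lemma dampedKernel_apply_of_mem (hy : y ∈ C) : dampedKernel hC e Q y = e • Q y := if_pos hy

lemma dampedKernel_apply_of_notMem (hy : y ∉ C) : dampedKernel hC e Q y = Q y := if_neg hy

lemma dampedKernel_le (he : e ≤ 1) : dampedKernel hC e Q ≤ Q := fun y => by
  by_cases hy : y ∈ C
  · rw [dampedKernel_apply_of_mem hy]
    exact fun s => mul_le_of_le_one_left' he
  · rw [dampedKernel_apply_of_notMem hy]

lemma map_dampedKernel_add_indicator {X : Type*} [MeasurableSpace X] {π : Y → X}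
    {ν η : Y → Measure X} (hmem : ∀ y ∈ C, e • (Q y).map π + ν y = η y)
    (hnotMem : ∀ y ∉ C, (Q y).map π = η y) (y : Y) :
    (dampedKernel hC e Q y).map π + C.indicator ν y = η y := by
  by_cases hy : y ∈ C
  · rw [dampedKernel_apply_of_mem hy, indicator_of_mem hy, Measure.map_smul, hmem y hy]
  · rw [dampedKernel_apply_of_notMem hy, indicator_of_notMem hy, add_zero, hnotMem y hy]

lemma lintegral_dampedKernel_pow_succ_of_mem {W : Y → ℝ≥0∞} (hW : Measurable W) (n : ℕ)
    (hy : y ∈ C) : ∫⁻ z, W z ∂(dampedKernel hC e Q ^ (n + 1)) y =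
      e * ∫⁻ x, ∫⁻ z, W z ∂(dampedKernel hC e Q ^ n) x ∂Q y := by
  rw [lintegral_pow_succ _ hW, dampedKernel_apply_of_mem hy, lintegral_smul_measure, smul_eq_mul]

lemma lintegral_dampedKernel_pow_succ_of_notMem {W : Y → ℝ≥0∞} (hW : Measurable W) (n : ℕ)
    (hy : y ∉ C) : ∫⁻ z, W z ∂(dampedKernel hC e Q ^ (n + 1)) y =
      ∫⁻ x, ∫⁻ z, W z ∂(dampedKernel hC e Q ^ n) x ∂Q y := by
  rw [lintegral_pow_succ _ hW, dampedKernel_apply_of_notMem hy]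

end DampedKernel

section VisitSplit

variable {Y : Type*} [MeasurableSpace Y] {C : Set Y} {Q : Kernel Y Y} {W V : Y → ℝ≥0∞}
  {e l B : ℝ≥0∞} {y : Y}

/-- Bound on the `n`-step expectation of `W` under a kernel damped by `e` on a set. The first term
accounts for the paths that visit the set more than `m` times, the second one for the others, along
which `V` is contracted by `l` at each step up to a factor `B` per visit. -/
noncomputable def visitSplitBound (Q : Kernel Y Y) (W V : Y → ℝ≥0∞) (e l B : ℝ≥0∞) (n m : ℕ)
    (y : Y) : ℝ≥0∞ :=
  (if m < n then e ^ (m + 1) * ∫⁻ z, W z ∂(Q ^ n) y else 0) + l ^ n * B ^ m * V y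

lemma lintegral_visitSplitBound (hW : Measurable W) (hV : Measurable V) (n m : ℕ) (y : Y) :
    ∫⁻ z, visitSplitBound Q W V e l B n m z ∂Q y =
      (if m < n then e ^ (m + 1) * ∫⁻ z, W z ∂(Q ^ (n + 1)) y else 0) +
        l ^ n * B ^ m * ∫⁻ z, V z ∂Q y := by
  unfold visitSplitBound
  rw [lintegral_add_right _ (hV.const_mul _), lintegral_const_mul _ hV]
  split_ifs
  · rw [lintegral_const_mul _ hW.lintegral_kernel, lintegral_pow_succ Q hW]
  · rw [lintegral_zero]

lemma lintegral_visitSplitBound_le (hW : Measurable W) (hV : Measurable V)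
    (hy : ∫⁻ z, V z ∂Q y ≤ l * V y) (n m : ℕ) :
    ∫⁻ z, visitSplitBound Q W V e l B n m z ∂Q y ≤ visitSplitBound Q W V e l B (n + 1) m y := by
  rw [lintegral_visitSplitBound hW hV]
  refine add_le_add ?_ ?_
  · split_ifs
    · exact le_rfl
    · omega
    · exact zero_le
    · exact le_rfl
  · calc l ^ n * B ^ m * ∫⁻ z, V z ∂Q y
        ≤ l ^ n * B ^ m * (l * V y) := by gcongr
      _ = l ^ (n + 1) * B ^ m * V y := by ring

lemma mul_lintegral_visitSplitBound_le (hW : Measurable W) (hV : Measurable V)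
    (hy : e * ∫⁻ z, V z ∂Q y ≤ l * B * V y) (n m : ℕ) :
    e * ∫⁻ z, visitSplitBound Q W V e l B n m z ∂Q y ≤
      visitSplitBound Q W V e l B (n + 1) (m + 1) y := by
  rw [lintegral_visitSplitBound hW hV, mul_add]
  refine add_le_add (le_of_eq ?_) ?_
  · simp only [add_lt_add_iff_right, mul_ite, mul_zero, ← mul_assoc, ← pow_succ']
  · calc e * (l ^ n * B ^ m * ∫⁻ z, V z ∂Q y)
        = l ^ n * B ^ m * (e * ∫⁻ z, V z ∂Q y) := by ring
      _ ≤ l ^ n * B ^ m * (l * B * V y) := by gcongr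
      _ = l ^ (n + 1) * B ^ (m + 1) * V y := by ring

lemma lintegral_dampedKernel_pow_le {hC : MeasurableSet C} (he : e ≤ 1) (hB : 1 ≤ B)
    (hW : Measurable W) (hV : Measurable V) (hWV : W ≤ V)
    (hnotMem : ∀ y ∉ C, ∫⁻ z, V z ∂Q y ≤ l * V y)
    (hmem : ∀ y ∈ C, e * ∫⁻ z, V z ∂Q y ≤ l * B * V y) (n m : ℕ) (y : Y) :
    ∫⁻ z, W z ∂(dampedKernel hC e Q ^ n) y ≤ visitSplitBound Q W V e l B n m y := by
  induction n generalizing m y with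
  | zero =>
    calc ∫⁻ z, W z ∂(dampedKernel hC e Q ^ 0) y
        = W y := lintegral_dirac' y hW
      _ ≤ l ^ 0 * B ^ m * V y := by
          rw [pow_zero, one_mul]
          exact (hWV y).trans (le_mul_of_one_le_left' (one_le_pow₀ hB))
      _ ≤ visitSplitBound Q W V e l B 0 m y := le_add_self
  | succ n ih =>
    by_cases hy : y ∈ C
    · rw [lintegral_dampedKernel_pow_succ_of_mem hW n hy]
      cases m with
      | zero =>
        -- the present visit already accounts for the single factor `e` that is needed
        calc e * ∫⁻ x, ∫⁻ z, W z ∂(dampedKernel hC e Q ^ n) x ∂Q y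
            ≤ e * ∫⁻ x, ∫⁻ z, W z ∂(Q ^ n) x ∂Q y :=
              mul_le_mul_right
                (lintegral_mono fun x => lintegral_pow_mono (dampedKernel_le he) hW n x) e
          _ ≤ visitSplitBound Q W V e l B (n + 1) 0 y := by
              rw [visitSplitBound, if_pos n.succ_pos, zero_add, pow_one, lintegral_pow_succ Q hW]
              exact le_self_add
      | succ m =>
        exact (mul_le_mul_right (lintegral_mono (ih m)) e).trans
          (mul_lintegral_visitSplitBound_le hW hV (hmem y hy) n m)
    · rw [lintegral_dampedKernel_pow_succ_of_notMem hW n hy]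
      exact (lintegral_mono (ih m)).trans
        (lintegral_visitSplitBound_le hW hV (hnotMem y hy) n m)

end VisitSplit

section Drift

variable {Y : Type*} [MeasurableSpace Y] {C : Set Y} {Q : Kernel Y Y}

/-- The constant `B` of the bound: a visit to `C` multiplies the expectation of `V` by at most
`l * B` when coupling fails there with probability `e`. -/
noncomputable def visitFactor (Q : Kernel Y Y) (C : Set Y) (V : Y → ℝ≥0∞) (e l : ℝ≥0∞) : ℝ≥0∞ :=
  max 1 (e * l⁻¹ * ⨆ y ∈ C, ∫⁻ z, V z ∂Q y)

lemma one_le_visitFactor (Q : Kernel Y Y) (C : Set Y) (V : Y → ℝ≥0∞) (e l : ℝ≥0∞) :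
    1 ≤ visitFactor Q C V e l := le_max_left _ _

lemma mul_lintegral_le_mul_visitFactor_mul {V : Y → ℝ≥0∞} {l : ℝ≥0∞} (hl0 : l ≠ 0) (hl : l ≠ ∞)
    (e : ℝ≥0∞) {y : Y} (hV : 1 ≤ V y) (hy : y ∈ C) :
    e * ∫⁻ z, V z ∂Q y ≤ l * visitFactor Q C V e l * V y :=
  calc e * ∫⁻ z, V z ∂Q y
      ≤ e * ⨆ y ∈ C, ∫⁻ z, V z ∂Q y :=
        mul_le_mul_right (le_iSup₂ (f := fun y (_ : y ∈ C) => ∫⁻ z, V z ∂Q y) y hy) e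
    _ = l * (e * l⁻¹ * ⨆ y ∈ C, ∫⁻ z, V z ∂Q y) := by
        rw [← mul_assoc, mul_left_comm l e, ENNReal.mul_inv_cancel hl0 hl, mul_one]
    _ ≤ l * visitFactor Q C V e l := mul_le_mul_right (le_max_right _ _) l
    _ ≤ l * visitFactor Q C V e l * V y := le_mul_of_one_le_right' hV

variable {V : Y → ℝ} {lam b : ℝ}

lemma lintegral_le_mul_of_drift_of_notMem (hlam : 0 ≤ lam)
    (hdrift : ∀ y, ∫⁻ z, ENNReal.ofReal (V z) ∂Q y ≤
      ENNReal.ofReal (lam * V y + C.indicator (fun _ => b) y)) {y : Y} (hy : y ∉ C) :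
    ∫⁻ z, ENNReal.ofReal (V z) ∂Q y ≤ ENNReal.ofReal lam * ENNReal.ofReal (V y) := by
  have := hdrift y
  rwa [indicator_of_notMem hy, add_zero, ENNReal.ofReal_mul hlam] at this

lemma lintegral_le_mul_add_of_drift (hlam : 0 ≤ lam)
    (hdrift : ∀ y, ∫⁻ z, ENNReal.ofReal (V z) ∂Q y ≤
      ENNReal.ofReal (lam * V y + C.indicator (fun _ => b) y)) (y : Y) :
    ∫⁻ z, ENNReal.ofReal (V z) ∂Q y ≤
      ENNReal.ofReal lam * ENNReal.ofReal (V y) + ENNReal.ofReal b := by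
  by_cases hy : y ∈ C
  · have := hdrift y
    rw [indicator_of_mem hy] at this
    exact this.trans (ENNReal.ofReal_add_le.trans_eq (by rw [ENNReal.ofReal_mul hlam]))
  · exact (lintegral_le_mul_of_drift_of_notMem hlam hdrift hy).trans le_self_add

lemma ofReal_mul_ofReal_div_one_sub_add_le (hlam0 : 0 ≤ lam) (hlam1 : lam < 1) (b : ℝ) :
    ENNReal.ofReal lam * ENNReal.ofReal (b / (1 - lam)) + ENNReal.ofReal b ≤
      ENNReal.ofReal (b / (1 - lam)) := by
  have hpos : 0 < 1 - lam := sub_pos.2 hlam1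
  obtain hb | hb := le_total b 0
  · rw [ENNReal.ofReal_of_nonpos hb,
      ENNReal.ofReal_of_nonpos (div_nonpos_of_nonpos_of_nonneg hb hpos.le), mul_zero, add_zero]
  · have hfix : lam * (b / (1 - lam)) + b = b / (1 - lam) := by field_simp; ring
    rw [← ENNReal.ofReal_mul hlam0, ← ENNReal.ofReal_add (by positivity) hb, hfix]

end Drift

section CouplingBound

variable {X : Type*} [MeasurableSpace X] {P : Kernel X X} {C : Set (X × X)}
  {Q : Kernel (X × X) (X × X)} {e : ℝ≥0∞}

lemma IsPartialCoupling.fDist_iterMeas_le_of_visits {hC : MeasurableSet C} {N : Kernel (X × X) X}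
    (h : IsPartialCoupling P (dampedKernel hC e Q) N) (he : e ≤ 1) {l B : ℝ≥0∞} (hB : 1 ≤ B)
    {V W : X × X → ℝ≥0∞} (hW : Measurable W) (hV : Measurable V) (hWV : W ≤ V)
    (hnotMem : ∀ p ∉ C, ∫⁻ z, V z ∂Q p ≤ l * V p)
    (hmem : ∀ p ∈ C, e * ∫⁻ z, V z ∂Q p ≤ l * B * V p) {g : X → ℝ}
    (hg : ∀ x x', ENNReal.ofReal (g x + g x') ≤ 2 * W (x, x')) (γ : Measure (X × X)) (n : ℕ)
    {j : ℕ} (hj : 1 ≤ j) {D : ℝ≥0∞} (hD : ∫⁻ p, ∫⁻ z, W z ∂(Q ^ n) p ∂γ ≤ D) :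
    fDist g (iterMeas P γ.fst n) (iterMeas P γ.snd n) ≤
      (if j ≤ n then 2 * e ^ j * D else 0) + 2 * l ^ n * B ^ (j - 1) * ∫⁻ p, V p ∂γ := by
  obtain ⟨m, rfl⟩ := Nat.exists_eq_add_of_le' hj
  calc fDist g (iterMeas P γ.fst n) (iterMeas P γ.snd n)
      ≤ 2 * ∫⁻ p, ∫⁻ z, W z ∂(dampedKernel hC e Q ^ n) p ∂γ := h.fDist_iterMeas_le hW hg γ n
    _ ≤ 2 * ∫⁻ p, visitSplitBound Q W V e l B n m p ∂γ :=
        mul_le_mul_right (lintegral_mono fun p =>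
          lintegral_dampedKernel_pow_le he hB hW hV hWV hnotMem hmem n m p) 2
    _ ≤ 2 * ((if m < n then e ^ (m + 1) * D else 0) + l ^ n * B ^ m * ∫⁻ p, V p ∂γ) := by
        unfold visitSplitBound
        rw [lintegral_add_right _ (hV.const_mul _), lintegral_const_mul _ hV]
        gcongr
        split_ifs
        · rw [lintegral_const_mul _ hW.lintegral_kernel]
          gcongr
        · rw [lintegral_zero]
    _ = (if m + 1 ≤ n then 2 * e ^ (m + 1) * D else 0) +
          2 * l ^ n * B ^ (m + 1 - 1) * ∫⁻ p, V p ∂γ := by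
        simp only [mul_add, mul_ite, mul_zero, ← mul_assoc, Nat.add_one_le_iff,
          add_tsub_cancel_right]

lemma exists_isPartialCoupling_dampedKernel [IsFiniteKernel P] (hC : MeasurableSet C) {a : ℝ≥0∞}
    {ν : X × X → Measure X}
    (hmem_fst : ∀ p ∈ C, ∀ A, MeasurableSet A → e * Q p (A ×ˢ univ) + a * ν p A = P p.1 A)
    (hmem_snd : ∀ p ∈ C, ∀ A, MeasurableSet A → e * Q p (univ ×ˢ A) + a * ν p A = P p.2 A)
    (hnotMem_fst : ∀ p ∉ C, ∀ A, MeasurableSet A → Q p (A ×ˢ univ) = P p.1 A)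
    (hnotMem_snd : ∀ p ∉ C, ∀ A, MeasurableSet A → Q p (univ ×ˢ A) = P p.2 A) :
    ∃ N, IsPartialCoupling P (dampedKernel hC e Q) N := by
  refine exists_isPartialCoupling (ν := C.indicator fun p => a • ν p)
    (map_dampedKernel_add_indicator (η := fun p : X × X => P p.1) (fun p hp => ?_) fun p hp => ?_)
    (map_dampedKernel_add_indicator (η := fun p : X × X => P p.2) (fun p hp => ?_) fun p hp => ?_)
  all_goals ext A hA
  · rw [Measure.add_apply, Measure.smul_apply, Measure.smul_apply, Measure.map_apply
      measurable_fst hA, ← prod_univ, smul_eq_mul, smul_eq_mul, hmem_fst p hp A hA]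
  · rw [Measure.map_apply measurable_fst hA, ← prod_univ, hnotMem_fst p hp A hA]
  · rw [Measure.add_apply, Measure.smul_apply, Measure.smul_apply, Measure.map_apply
      measurable_snd hA, ← univ_prod, smul_eq_mul, smul_eq_mul, hmem_snd p hp A hA]
  · rw [Measure.map_apply measurable_snd hA, ← univ_prod, hnotMem_snd p hp A hA]

end CouplingBound

theorem quantitative_bounds_time_homogeneous_general
    {X : Type*} [MeasurableSpace X] (P : Kernel X X) [IsFiniteKernel P]
    {C : Set (X × X)} (hC : MeasurableSet C) {ε : ℝ} (hε0 : 0 ≤ ε) (hε1 : ε ≤ 1)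
    {ν : X × X → Measure X} (Q : Kernel (X × X) (X × X)) [IsMarkovKernel Q]
    (hmem_fst : ∀ p ∈ C, ∀ A : Set X, MeasurableSet A →
      ENNReal.ofReal (1 - ε) * Q p (A ×ˢ univ) + ENNReal.ofReal ε * ν p A = P p.1 A)
    (hmem_snd : ∀ p ∈ C, ∀ A : Set X, MeasurableSet A →
      ENNReal.ofReal (1 - ε) * Q p (univ ×ˢ A) + ENNReal.ofReal ε * ν p A = P p.2 A)
    (hnotMem_fst : ∀ p ∉ C, ∀ A : Set X, MeasurableSet A → Q p (A ×ˢ univ) = P p.1 A)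
    (hnotMem_snd : ∀ p ∉ C, ∀ A : Set X, MeasurableSet A → Q p (univ ×ˢ A) = P p.2 A)
    {V : X × X → ℝ} (hV1 : ∀ p, 1 ≤ V p) (hVm : Measurable V)
    {lam b : ℝ} (hlam0 : 0 < lam) (hlam1 : lam < 1)
    (hdrift : ∀ p, ∫⁻ z, ENNReal.ofReal (V z) ∂(Q p) ≤
      ENNReal.ofReal (lam * V p + C.indicator (fun _ => b) p))
    {f : X → ℝ} (hfV : ∀ x x' : X, f x + f x' ≤ 2 * V (x, x'))
    (n : ℕ) {j : ℕ} (hj : 1 ≤ j) (γ : Measure (X × X)) [IsProbabilityMeasure γ] :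
    fDist (fun _ => 1) (iterMeas P γ.fst n) (iterMeas P γ.snd n) ≤
      (if j ≤ n then ENNReal.ofReal (2 * (1 - ε) ^ j) else 0) +
        ENNReal.ofReal (2 * lam ^ n) *
          visitFactor Q C (fun p => ENNReal.ofReal (V p)) (ENNReal.ofReal (1 - ε))
            (ENNReal.ofReal lam) ^ (j - 1) *
          ∫⁻ p, ENNReal.ofReal (V p) ∂γ ∧
    fDist f (iterMeas P γ.fst n) (iterMeas P γ.snd n) ≤
      (if j ≤ n then ENNReal.ofReal (2 * (1 - ε) ^ j) *
          (ENNReal.ofReal (b / (1 - lam)) +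
            ENNReal.ofReal (lam ^ n) * ∫⁻ p, ENNReal.ofReal (V p) ∂γ) else 0) +
        ENNReal.ofReal (2 * lam ^ n) *
          visitFactor Q C (fun p => ENNReal.ofReal (V p)) (ENNReal.ofReal (1 - ε))
            (ENNReal.ofReal lam) ^ (j - 1) *
          ∫⁻ p, ENNReal.ofReal (V p) ∂γ := by
  obtain ⟨N, hN⟩ := exists_isPartialCoupling_dampedKernel hC hmem_fst hmem_snd hnotMem_fst
    hnotMem_snd
  have hV : Measurable fun p => ENNReal.ofReal (V p) := hVm.ennreal_ofReal
  have one_le_V : 1 ≤ fun p => ENNReal.ofReal (V p) := fun p => ENNReal.one_le_ofReal.2 (hV1 p)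
  have ofReal_two_mul_pow {r : ℝ} (hr : 0 ≤ r) (k : ℕ) :
      ENNReal.ofReal (2 * r ^ k) = 2 * ENNReal.ofReal r ^ k := by
    rw [ENNReal.ofReal_mul zero_le_two, ENNReal.ofReal_pow hr, ENNReal.ofReal_ofNat]
  have := isMarkovKernel_pow Q n
  have hbound {W : X × X → ℝ≥0∞} (hW : Measurable W) (hWV : W ≤ fun p => ENNReal.ofReal (V p))
      {g : X → ℝ} (hg : ∀ x x', ENNReal.ofReal (g x + g x') ≤ 2 * W (x, x')) {D : ℝ≥0∞}
      (hD : ∫⁻ p, ∫⁻ z, W z ∂(Q ^ n) p ∂γ ≤ D) :=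
    hN.fDist_iterMeas_le_of_visits (ENNReal.ofReal_le_one.2 (sub_le_self 1 hε0))
      (one_le_visitFactor Q C _ _ _) hW hV hWV
      (fun p hp => lintegral_le_mul_of_drift_of_notMem hlam0.le hdrift hp)
      (fun p hp => mul_lintegral_le_mul_visitFactor_mul (ENNReal.ofReal_pos.2 hlam0).ne'
        ENNReal.ofReal_ne_top _ (one_le_V p) hp) hg γ n hj hD
  rw [ofReal_two_mul_pow hlam0.le, ofReal_two_mul_pow (sub_nonneg.2 hε1),
    ENNReal.ofReal_pow hlam0.le]
  constructor
  · have hTV := hbound measurable_one one_le_V (g := fun _ => 1) (D := 1)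
      (fun _ _ => by norm_num) (by simp)
    rwa [mul_one] at hTV
  · refine hbound hV le_rfl (fun x x' => ?_)
      (lintegral_lintegral_pow_le_of_drift Q hV (lintegral_le_mul_add_of_drift hlam0.le hdrift)
        (ofReal_mul_ofReal_div_one_sub_add_le hlam0.le hlam1 b) n γ)
    rw [← ENNReal.ofReal_ofNat 2, ← ENNReal.ofReal_mul zero_le_two]
    exact ENNReal.ofReal_le_ofReal (hfV x x')

/-- Theorem 2: quantitative bounds on `‖ξPⁿ - ξ'Pⁿ‖_TV` and `‖ξPⁿ - ξ'Pⁿ‖_f` under the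
minorization condition (A1) and the bivariate drift condition (A2). -/
theorem quantitative_bounds_time_homogeneous
    {X : Type*} [MeasurableSpace X] (P : Kernel X X) [IsMarkovKernel P]
    -- (A1): coupling set, minorization constant and minorizing measures
    (Cbar : Set (X × X)) (hCbar : MeasurableSet Cbar)
    (ε : ℝ) (hε0 : 0 < ε) (hε1 : ε < 1)
    (ν : X × X → Measure X) (hν : ∀ p ∈ Cbar, IsProbabilityMeasure (ν p))
    (hminor : ∀ p ∈ Cbar, ∀ A : Set X, MeasurableSet A →
      ENNReal.ofReal ε * ν p A ≤ min (P p.1 A) (P p.2 A))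
    -- the residual kernel R̄ with marginals (1-ε)⁻¹(P - εν)
    (Rbar : Kernel (X × X) (X × X)) [IsMarkovKernel Rbar]
    (hRbar1 : ∀ p ∈ Cbar, ∀ A : Set X, MeasurableSet A →
      ENNReal.ofReal (1 - ε) * Rbar p (A ×ˢ Set.univ) + ENNReal.ofReal ε * ν p A = P p.1 A)
    (hRbar2 : ∀ p ∈ Cbar, ∀ A : Set X, MeasurableSet A →
      ENNReal.ofReal (1 - ε) * Rbar p (Set.univ ×ˢ A) + ENNReal.ofReal ε * ν p A = P p.2 A)
    -- the kernel P̄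
    (Pbar : Kernel (X × X) (X × X)) [IsMarkovKernel Pbar]
    (hPbar1 : ∀ p ∈ Cbar, ∀ A A' : Set X, MeasurableSet A → MeasurableSet A' →
      Pbar p (A ×ˢ A') = ENNReal.ofReal (1 - ε) * Rbar p (A ×ˢ A') +
        ENNReal.ofReal ε * ν p (A ∩ A'))
    (hPbar2 : ∀ p ∉ Cbar, ∀ A : Set X, MeasurableSet A →
      Pbar p (A ×ˢ Set.univ) = P p.1 A ∧ Pbar p (Set.univ ×ˢ A) = P p.2 A)
    -- the kernel P*
    (Pstar : Kernel (X × X) (X × X))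
    (hPstar1 : ∀ p ∈ Cbar, Pstar p = Rbar p) (hPstar2 : ∀ p ∉ Cbar, Pstar p = Pbar p)
    -- (A2): bivariate drift condition for P*
    (Vbar : X × X → ℝ) (hVbar1 : ∀ p, 1 ≤ Vbar p) (hVbarm : Measurable Vbar)
    (lam b : ℝ) (hlam0 : 0 < lam) (hlam1 : lam < 1)
    (hdrift : ∀ p, ∫⁻ z, ENNReal.ofReal (Vbar z) ∂(Pstar p) ≤
      ENNReal.ofReal (lam * Vbar p + Set.indicator Cbar (fun _ => b) p))
    -- the function f with f(x) + f(x') ≤ 2 V̄(x,x')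
    (f : X → ℝ) (hf1 : ∀ x, 1 ≤ f x) (hfm : Measurable f)
    (hfV : ∀ x x' : X, f x + f x' ≤ 2 * Vbar (x, x'))
    (n j : ℕ) (hn : 1 ≤ n) (hj1 : 1 ≤ j) (hj2 : j ≤ n + 1)
    (ξ ξ' : Measure X) [IsProbabilityMeasure ξ] [IsProbabilityMeasure ξ'] :
    fDist (fun _ => 1) (iterMeas P ξ n) (iterMeas P ξ' n) ≤
      (if j ≤ n then ENNReal.ofReal (2 * (1 - ε) ^ j) else 0) +
        ENNReal.ofReal (2 * lam ^ n) *
          (max 1 (ENNReal.ofReal (1 - ε) * (ENNReal.ofReal lam)⁻¹ *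
            ⨆ p ∈ Cbar, ∫⁻ z, ENNReal.ofReal (Vbar z) ∂(Rbar p))) ^ (j - 1) *
          ∫⁻ p, ENNReal.ofReal (Vbar p) ∂(ξ.prod ξ') ∧
    fDist f (iterMeas P ξ n) (iterMeas P ξ' n) ≤
      (if j ≤ n then ENNReal.ofReal (2 * (1 - ε) ^ j) *
          (ENNReal.ofReal (b / (1 - lam)) +
            ENNReal.ofReal (lam ^ n) * ∫⁻ p, ENNReal.ofReal (Vbar p) ∂(ξ.prod ξ')) else 0) +
        ENNReal.ofReal (2 * lam ^ n) *
          (max 1 (ENNReal.ofReal (1 - ε) * (ENNReal.ofReal lam)⁻¹ *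
            ⨆ p ∈ Cbar, ∫⁻ z, ENNReal.ofReal (Vbar z) ∂(Rbar p))) ^ (j - 1) *
          ∫⁻ p, ENNReal.ofReal (Vbar p) ∂(ξ.prod ξ') := by
  have : IsMarkovKernel Pstar := ⟨fun p => by
    by_cases hp : p ∈ Cbar
    · exact hPstar1 p hp ▸ inferInstance
    · exact hPstar2 p hp ▸ inferInstance⟩
  have hsup : ⨆ p ∈ Cbar, ∫⁻ z, ENNReal.ofReal (Vbar z) ∂(Rbar p) =
      ⨆ p ∈ Cbar, ∫⁻ z, ENNReal.ofReal (Vbar z) ∂(Pstar p) :=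
    biSup_congr fun p hp => by rw [hPstar1 p hp]
  have hbounds := quantitative_bounds_time_homogeneous_general P hCbar hε0.le hε1.le Pstar
    (fun p hp => hPstar1 p hp ▸ hRbar1 p hp) (fun p hp => hPstar1 p hp ▸ hRbar2 p hp)
    (fun p hp A hA => hPstar2 p hp ▸ (hPbar2 p hp A hA).1)
    (fun p hp A hA => hPstar2 p hp ▸ (hPbar2 p hp A hA).2)
    hVbar1 hVbarm hlam0 hlam1 hdrift hfV n hj1 (ξ.prod ξ')
  rw [Measure.fst_prod, Measure.snd_prod, visitFactor] at hbounds
  rwa [hsup]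
end

section
/- Assume (S). Then: (i) the set C̄ = C × C, the constant ε, and the constant family ν_{x,x'} = ν satisfy the minorization P(x,A) ∧ P(x',A) ≥ ε ν(A) for all (x,x') ∈ C × C and measurable A; and (ii) the kernel P*, defined as R̄(x,x'; A×A') := R(x,A)R(x',A') on C × C and P̄(x,x'; A×A') := P(x,A)P(x',A') off C × C, satisfies the bivariate drift condition P* V̄ ≤ λ V̄ + b 1_{C×C} with V̄(x,x') = (V(x) + V(x'))/2, λ = λ_c + b_c/(1+c), and b = max(cελ_c/(1−ε) − cb_c/(1+c), 0) + (b_c − ε)/(1−ε). -/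
open MeasureTheory ProbabilityTheory Set
open scoped ENNReal

/-!
The mean `V̄` is additive in its two arguments, so its integral against a product of probability
measures is the mean of the two marginal integrals, and both bounds reduce to univariate ones.

* On `C × C`, integrating `P = (1 - ε) R + ε ν` and using `∫ V dν ≥ 1` gives
  `R V ≤ (λ_c V + b_c - ε) / (1 - ε)`. With `s = V̄(x, x')` and
  `k = ε λ_c / (1 - ε) - b_c / (1 + c)`, the claim becomes `k s ≤ max (k c) 0`, which holds since
  `0 ≤ s ≤ c`.
* Off `C × C`, at most one of the two points lies in `C`, so the constants of the two univariate
  drifts add up to at most `b_c`; a point outside `C` satisfies `V > c`, so that `1 + c ≤ 2 V̄` and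
  `b_c ≤ b_c / (1 + c) * 2 V̄`.

The second case needs `0 ≤ b_c`, which the drift condition itself forces: otherwise `P V ≤ λ_c V`,
so that `λ_c > 0` and `inf V ≤ λ_c inf V`, contradicting `λ_c < 1` and `V ≥ 1`.
-/

section ProductMean

variable {X Y : Type*} [MeasurableSpace X] [MeasurableSpace Y]

lemma lintegral_prod_fst_add_snd (μ : Measure X) (ν : Measure Y) [IsProbabilityMeasure μ]
    [IsProbabilityMeasure ν] {f : X → ℝ≥0∞} {g : Y → ℝ≥0∞} (hf : Measurable f)
    (hg : Measurable g) :
    ∫⁻ z, f z.1 + g z.2 ∂(μ.prod ν) = ∫⁻ x, f x ∂μ + ∫⁻ y, g y ∂ν := by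
  rw [lintegral_add_left (by fun_prop), measurePreserving_fst.lintegral_comp hf,
    measurePreserving_snd.lintegral_comp hg]

lemma lintegral_ofReal_mean_prod_le {μ : Measure X} {ν : Measure Y} [IsProbabilityMeasure μ]
    [IsProbabilityMeasure ν] {V : X → ℝ} {W : Y → ℝ} (hV : Measurable V) (hW : Measurable W)
    {a a' : ℝ} (ha₀ : 0 ≤ a) (ha₀' : 0 ≤ a')
    (ha : ∫⁻ x, ENNReal.ofReal (V x) ∂μ ≤ ENNReal.ofReal a)
    (ha' : ∫⁻ y, ENNReal.ofReal (W y) ∂ν ≤ ENNReal.ofReal a') :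
    ∫⁻ z, ENNReal.ofReal ((V z.1 + W z.2) / 2) ∂(μ.prod ν) ≤ ENNReal.ofReal ((a + a') / 2) := by
  have ofReal_half (t : ℝ) : ENNReal.ofReal (t / 2) = ENNReal.ofReal t / 2 := by
    rw [ENNReal.ofReal_div_of_pos two_pos, ENNReal.ofReal_ofNat]
  simp only [ofReal_half, div_eq_mul_inv (b := (2 : ℝ≥0∞))]
  rw [lintegral_mul_const _ (by fun_prop), ENNReal.ofReal_add ha₀ ha₀']
  gcongr
  calc ∫⁻ z, ENNReal.ofReal (V z.1 + W z.2) ∂(μ.prod ν)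
      ≤ ∫⁻ z, ENNReal.ofReal (V z.1) + ENNReal.ofReal (W z.2) ∂(μ.prod ν) :=
        lintegral_mono fun _ ↦ ENNReal.ofReal_add_le
    _ = ∫⁻ x, ENNReal.ofReal (V x) ∂μ + ∫⁻ y, ENNReal.ofReal (W y) ∂ν :=
        lintegral_prod_fst_add_snd μ ν hV.ennreal_ofReal hW.ennreal_ofReal
    _ ≤ ENNReal.ofReal a + ENNReal.ofReal a' := add_le_add ha ha'

end ProductMean

section LowerBound

variable {X : Type*} [MeasurableSpace X] {V : X → ℝ} {m a ε : ℝ}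

lemma ofReal_le_lintegral_ofReal (μ : Measure X) [IsProbabilityMeasure μ] (hV : ∀ x, m ≤ V x) :
    ENNReal.ofReal m ≤ ∫⁻ x, ENNReal.ofReal (V x) ∂μ :=
  calc ENNReal.ofReal m = ∫⁻ _, ENNReal.ofReal m ∂μ := by simp
    _ ≤ ∫⁻ x, ENNReal.ofReal (V x) ∂μ :=
        lintegral_mono fun x ↦ ENNReal.ofReal_le_ofReal (hV x)

lemma le_of_lintegral_ofReal_le {μ : Measure X} [IsProbabilityMeasure μ] (hm : 0 < m)
    (hV : ∀ x, m ≤ V x) (ha : ∫⁻ x, ENNReal.ofReal (V x) ∂μ ≤ ENNReal.ofReal a) : m ≤ a :=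
  (ENNReal.ofReal_le_ofReal_iff'.1 ((ofReal_le_lintegral_ofReal μ hV).trans ha)).resolve_right
    hm.not_ge

lemma lintegral_ofReal_residual_le {π ρ ν : Measure X} [IsProbabilityMeasure ν] (hm : 0 ≤ m)
    (hV : ∀ x, m ≤ V x) (hε₀ : 0 ≤ ε) (hε₁ : ε < 1)
    (hπ : π = ENNReal.ofReal (1 - ε) • ρ + ENNReal.ofReal ε • ν)
    (ha : ∫⁻ x, ENNReal.ofReal (V x) ∂π ≤ ENNReal.ofReal a) :
    ∫⁻ x, ENNReal.ofReal (V x) ∂ρ ≤ ENNReal.ofReal ((a - ε * m) / (1 - ε)) := by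
  have hsum : (∫⁻ x, ENNReal.ofReal (V x) ∂ρ) * ENNReal.ofReal (1 - ε) + ENNReal.ofReal (ε * m) ≤
      ENNReal.ofReal a :=
    calc _ ≤ ENNReal.ofReal (1 - ε) * (∫⁻ x, ENNReal.ofReal (V x) ∂ρ) +
          ENNReal.ofReal ε * ∫⁻ x, ENNReal.ofReal (V x) ∂ν := by
          rw [mul_comm, ENNReal.ofReal_mul hε₀]
          gcongr
          exact ofReal_le_lintegral_ofReal ν hV
      _ = ∫⁻ x, ENNReal.ofReal (V x) ∂π := by
          rw [hπ, lintegral_add_measure, lintegral_smul_measure, lintegral_smul_measure,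
            smul_eq_mul, smul_eq_mul]
      _ ≤ ENNReal.ofReal a := ha
  rw [ENNReal.ofReal_div_of_pos (sub_pos.2 hε₁), ENNReal.ofReal_sub _ (mul_nonneg hε₀ hm)]
  exact ENNReal.le_div_iff_mul_le (.inl (by simpa using hε₁)) (.inl ENNReal.ofReal_ne_top) |>.2
    (ENNReal.le_sub_of_add_le_right ENNReal.ofReal_ne_top hsum)

end LowerBound

lemma residual_bound_le {ε lam b c s : ℝ} (hε : ε ≠ 1) (hs : 0 ≤ s) (hsc : s ≤ c) :
    (lam * s + b - ε) / (1 - ε) ≤ (lam + b / (1 + c)) * s +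
      (max (c * ε * lam / (1 - ε) - c * b / (1 + c)) 0 + (b - ε) / (1 - ε)) := by
  have hε' : 1 - ε ≠ 0 := sub_ne_zero.2 hε.symm
  set k := ε * lam / (1 - ε) - b / (1 + c) with hk
  have hks : s * k ≤ max (c * ε * lam / (1 - ε) - c * b / (1 + c)) 0 :=
    calc s * k ≤ s * max k 0 := by gcongr; exact le_max_left k 0
      _ ≤ c * max k 0 := by gcongr
      _ = max (c * k) 0 := by rw [mul_max_of_nonneg _ _ (hs.trans hsc), mul_zero]
      _ = max (c * ε * lam / (1 - ε) - c * b / (1 + c)) 0 := by rw [hk]; congr 1; ring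
  calc (lam * s + b - ε) / (1 - ε)
      = lam * s + ε * lam / (1 - ε) * s + (b - ε) / (1 - ε) := by field_simp; ring
    _ = (lam + b / (1 + c)) * s + (s * k + (b - ε) / (1 - ε)) := by rw [hk]; ring
    _ ≤ _ := by gcongr

lemma indicator_add_indicator_le {X : Type*} {V : X → ℝ} {C : Set X} {b c : ℝ} (hb : 0 ≤ b)
    (hc : 0 < 1 + c) (hV : ∀ x, 1 ≤ V x) (hC : ∀ x ∉ C, c ≤ V x) {x x' : X}
    (hx : x ∉ C ∨ x' ∉ C) :
    C.indicator (fun _ ↦ b) x + C.indicator (fun _ ↦ b) x' ≤ b / (1 + c) * (V x + V x') := by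
  have indicator_le (y : X) : C.indicator (fun _ ↦ b) y ≤ b :=
    indicator_le_self' (fun _ _ ↦ hb) y
  have hsum : C.indicator (fun _ ↦ b) x + C.indicator (fun _ ↦ b) x' ≤ b := by
    rcases hx with hx | hx <;> simp [hx, indicator_le]
  have hVsum : 1 + c ≤ V x + V x' := by
    rcases hx with hx | hx
    · linarith [hC x hx, hV x']
    · linarith [hC x' hx, hV x]
  calc _ ≤ b := hsum
    _ = b / (1 + c) * (1 + c) := (div_mul_cancel₀ b hc.ne').symm
    _ ≤ b / (1 + c) * (V x + V x') := by gcongr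

/-- The (Foster–Lyapunov) drift condition `P V ≤ lam * V + b * 1_C`, which bounds the mean of `V`
after one step of the chain, with an excess `b` allowed on `C` only. As in `ENNReal.ofReal`,
negative values of `V` and of the right-hand side are truncated to `0`. -/
def DriftCondition {X : Type*} [MeasurableSpace X] (P : Kernel X X) (V : X → ℝ) (C : Set X)
    (lam b : ℝ) : Prop :=
  ∀ x, ∫⁻ y, ENNReal.ofReal (V y) ∂(P x) ≤
    ENNReal.ofReal (lam * V x + C.indicator (fun _ ↦ b) x)

namespace DriftCondition

variable {X : Type*} [MeasurableSpace X] {P : Kernel X X} {V : X → ℝ} {C : Set X} {lam b c : ℝ}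

lemma const_nonneg [Nonempty X] [IsMarkovKernel P] (h : DriftCondition P V C lam b) {m : ℝ}
    (hm : 0 < m) (hV : ∀ x, m ≤ V x) (hlam : lam < 1) : 0 ≤ b := by
  by_contra! hb
  have hinf_pos : 0 < ⨅ y, V y := hm.trans_le (le_ciInf hV)
  have hinf_le (x : X) : ⨅ y, V y ≤ V x := ciInf_le ⟨m, forall_mem_range.2 hV⟩ x
  have hcontract (x : X) : ⨅ y, V y ≤ lam * V x :=
    (le_of_lintegral_ofReal_le hinf_pos hinf_le (h x)).trans
      (add_le_of_nonpos_right (indicator_nonpos (fun _ _ ↦ hb.le) x))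
  have hlam_pos : 0 < lam :=
    have x : X := Classical.arbitrary X
    pos_of_mul_pos_left (hinf_pos.trans_le (hcontract x)) (hm.le.trans (hV x))
  have hinf : ⨅ y, V y ≤ lam * ⨅ y, V y := by
    rw [Real.mul_iInf_of_nonneg hlam_pos.le]
    exact le_ciInf hcontract
  exact hinf.not_gt (mul_lt_of_lt_one_left hinf_pos hlam)

lemma lintegral_residual_prod_le (h : DriftCondition P V C lam b) (hVm : Measurable V)
    (hV : ∀ x, 1 ≤ V x) (hC : ∀ x ∈ C, V x ≤ c) {ε : ℝ} (hε₀ : 0 ≤ ε) (hε₁ : ε < 1)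
    {ν ρ ρ' : Measure X} [IsProbabilityMeasure ν] [IsProbabilityMeasure ρ]
    [IsProbabilityMeasure ρ'] {x x' : X} (hx : x ∈ C) (hx' : x' ∈ C)
    (hρ : P x = ENNReal.ofReal (1 - ε) • ρ + ENNReal.ofReal ε • ν)
    (hρ' : P x' = ENNReal.ofReal (1 - ε) • ρ' + ENNReal.ofReal ε • ν) :
    ∫⁻ z, ENNReal.ofReal ((V z.1 + V z.2) / 2) ∂(ρ.prod ρ') ≤
      ENNReal.ofReal ((lam + b / (1 + c)) * ((V x + V x') / 2) +
        (max (c * ε * lam / (1 - ε) - c * b / (1 + c)) 0 + (b - ε) / (1 - ε))) := by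
  have residual_le {y : X} {σ : Measure X} (hy : y ∈ C)
      (hσ : P y = ENNReal.ofReal (1 - ε) • σ + ENNReal.ofReal ε • ν) :
      ∫⁻ z, ENNReal.ofReal (V z) ∂σ ≤ ENNReal.ofReal ((lam * V y + b - ε) / (1 - ε)) := by
    have hy_drift := h y
    rw [indicator_of_mem hy] at hy_drift
    simpa only [mul_one] using
      lintegral_ofReal_residual_le zero_le_one hV hε₀ hε₁ hσ hy_drift
  have hbound := residual_le hx hρ
  have hbound' := residual_le hx' hρ'
  have hpos := zero_le_one.trans (le_of_lintegral_ofReal_le one_pos hV hbound)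
  have hpos' := zero_le_one.trans (le_of_lintegral_ofReal_le one_pos hV hbound')
  refine (lintegral_ofReal_mean_prod_le hVm hVm hpos hpos' hbound hbound').trans
    (ENNReal.ofReal_le_ofReal ?_)
  calc _ = (lam * ((V x + V x') / 2) + b - ε) / (1 - ε) := by ring
    _ ≤ _ := residual_bound_le hε₁.ne (by linarith [hV x, hV x']) (by linarith [hC x hx, hC x' hx'])

lemma lintegral_prod_le_of_notMem [IsMarkovKernel P] (h : DriftCondition P V C lam b)
    (hVm : Measurable V) (hV : ∀ x, 1 ≤ V x) (hC : ∀ x ∉ C, c ≤ V x) (hc : 0 < 1 + c)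
    (hlam : lam < 1) {x x' : X} (hx : x ∉ C ∨ x' ∉ C) :
    ∫⁻ z, ENNReal.ofReal ((V z.1 + V z.2) / 2) ∂((P x).prod (P x')) ≤
      ENNReal.ofReal ((lam + b / (1 + c)) * ((V x + V x') / 2)) := by
  have : Nonempty X := ⟨x⟩
  have hb : 0 ≤ b := h.const_nonneg one_pos hV hlam
  have hpos (y : X) := zero_le_one.trans (le_of_lintegral_ofReal_le one_pos hV (h y))
  refine (lintegral_ofReal_mean_prod_le hVm hVm (hpos x) (hpos x') (h x) (h x')).trans
    (ENNReal.ofReal_le_ofReal ?_)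
  linarith [indicator_add_indicator_le hb hc hV hC hx]

end DriftCondition

theorem bivariate_drift_from_univariate_general {X : Type*} [MeasurableSpace X] (P : Kernel X X)
    [IsMarkovKernel P] (V : X → ℝ) (hV1 : ∀ x, 1 ≤ V x) (hVm : Measurable V) (c : ℝ) (hc : 0 ≤ c)
    (ε : ℝ) (hε0 : 0 ≤ ε) (hε1 : ε < 1) (ν : Measure X) [IsProbabilityMeasure ν]
    (lamc bc : ℝ) (hlamc : lamc < 1) (hdrift : DriftCondition P V {x | V x ≤ c} lamc bc)
    (R : Kernel X X) [IsMarkovKernel R]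
    (hR : ∀ x, V x ≤ c → ∀ A : Set X, MeasurableSet A →
      ENNReal.ofReal (1 - ε) * R x A + ENNReal.ofReal ε * ν A = P x A) :
    (∀ x x' : X, V x ≤ c → V x' ≤ c → ∀ A : Set X, MeasurableSet A →
      ENNReal.ofReal ε * ν A ≤ min (P x A) (P x' A)) ∧
    (∀ p : X × X, p ∈ {x | V x ≤ c} ×ˢ {x | V x ≤ c} →
      ∫⁻ z : X × X, ENNReal.ofReal ((V z.1 + V z.2) / 2) ∂((R p.1).prod (R p.2)) ≤
        ENNReal.ofReal ((lamc + bc / (1 + c)) * ((V p.1 + V p.2) / 2) +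
          (max (c * ε * lamc / (1 - ε) - c * bc / (1 + c)) 0 + (bc - ε) / (1 - ε)))) ∧
    (∀ p : X × X, p ∉ {x | V x ≤ c} ×ˢ {x | V x ≤ c} →
      ∫⁻ z : X × X, ENNReal.ofReal ((V z.1 + V z.2) / 2) ∂((P p.1).prod (P p.2)) ≤
        ENNReal.ofReal ((lamc + bc / (1 + c)) * ((V p.1 + V p.2) / 2))) := by
  have hdecomp (x : X) (hx : V x ≤ c) :
      P x = ENNReal.ofReal (1 - ε) • R x + ENNReal.ofReal ε • ν := by
    ext A hA
    simp [← hR x hx A hA]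
  have hminor (x : X) (hx : V x ≤ c) (A : Set X) (hA : MeasurableSet A) :
      ENNReal.ofReal ε * ν A ≤ P x A := le_add_self.trans (hR x hx A hA).le
  refine ⟨fun x x' hx hx' A hA ↦ le_min (hminor x hx A hA) (hminor x' hx' A hA),
    fun p hp ↦ ?_, fun p hp ↦ ?_⟩
  · exact hdrift.lintegral_residual_prod_le hVm hV1 (fun _ hx ↦ hx) hε0 hε1 hp.1 hp.2
      (hdecomp p.1 hp.1) (hdecomp p.2 hp.2)
  · exact hdrift.lintegral_prod_le_of_notMem hVm hV1 (fun _ hx ↦ (not_le.1 hx).le)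
      (by positivity) hlamc (not_and_or.1 hp)

/-- Proposition 4: under the univariate condition (S), the set `C × C` is a coupling set for `P`
and the kernel `P*` (built from `R ⊗ R` on `C × C` and `P ⊗ P` elsewhere) satisfies the
bivariate drift condition with `V̄(x,x') = (V(x) + V(x'))/2`, `λ = λ_c + b_c/(1+c)` and
`b = max(cελ_c/(1-ε) - cb_c/(1+c), 0) + (b_c - ε)/(1-ε)`. -/
theorem bivariate_drift_from_univariate
    {X : Type*} [MeasurableSpace X] (P : Kernel X X) [IsMarkovKernel P]
    -- (S)
    (V : X → ℝ) (hV1 : ∀ x, 1 ≤ V x) (hVm : Measurable V)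
    (c : ℝ) (hc : 0 ≤ c)
    (ε : ℝ) (hε0 : 0 < ε) (hε1 : ε < 1)
    (ν : Measure X) [IsProbabilityMeasure ν]
    (hsmall : ∀ x, V x ≤ c → ∀ A : Set X, MeasurableSet A → ENNReal.ofReal ε * ν A ≤ P x A)
    (lamc bc : ℝ) (hlamc : lamc < 1)
    (hdrift : ∀ x, ∫⁻ y, ENNReal.ofReal (V y) ∂(P x) ≤
      ENNReal.ofReal (lamc * V x + Set.indicator {x' | V x' ≤ c} (fun _ => bc) x))
    (hlt : lamc + bc / (1 + c) < 1)
    -- the univariate residual kernel R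
    (R : Kernel X X) [IsMarkovKernel R]
    (hR : ∀ x, V x ≤ c → ∀ A : Set X, MeasurableSet A →
      ENNReal.ofReal (1 - ε) * R x A + ENNReal.ofReal ε * ν A = P x A) :
    -- (i) (A1) holds with C̄ = C × C and ν_{x,x'} = ν
    (∀ x x' : X, V x ≤ c → V x' ≤ c → ∀ A : Set X, MeasurableSet A →
      ENNReal.ofReal ε * ν A ≤ min (P x A) (P x' A)) ∧
    -- (ii) (A2) holds for P* with V̄(x,x') = (V(x)+V(x'))/2: on C × C (where P* = R ⊗ R) ...
    (∀ p : X × X, p ∈ {x | V x ≤ c} ×ˢ {x | V x ≤ c} →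
      ∫⁻ z : X × X, ENNReal.ofReal ((V z.1 + V z.2) / 2) ∂((R p.1).prod (R p.2)) ≤
        ENNReal.ofReal ((lamc + bc / (1 + c)) * ((V p.1 + V p.2) / 2) +
          (max (c * ε * lamc / (1 - ε) - c * bc / (1 + c)) 0 + (bc - ε) / (1 - ε)))) ∧
    -- ... and off C × C (where P* = P ⊗ P)
    (∀ p : X × X, p ∉ {x | V x ≤ c} ×ˢ {x | V x ≤ c} →
      ∫⁻ z : X × X, ENNReal.ofReal ((V z.1 + V z.2) / 2) ∂((P p.1).prod (P p.2)) ≤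
        ENNReal.ofReal ((lamc + bc / (1 + c)) * ((V p.1 + V p.2) / 2))) :=
  bivariate_drift_from_univariate_general P V hV1 hVm c hc ε hε0.le hε1 ν lamc bc hlamc hdrift R hR
end

section
/- For every δ > 0, the set C̄(δ) := {(x,x') ∈ ℝ^d × ℝ^d : ‖x − x'‖ ≤ δ} is a (1, ε(δ))-coupling set: ε(δ) > 0, and for all (x,x') ∈ C̄(δ) and all measurable A ⊆ ℝ^d, P(x,A) ∧ P(x',A) ≥ ε(δ) ν_{x,x'}(A), where ν_{x,x'}(A) = [∫_A (q(z−g(x)) + q(z−g(x')) − |q(z−g(x)) − q(z−g(x'))|) dz] / [2 − ∫ |q(z−g(x)) − q(z−g(x'))| dz] and ε(δ) = 1 − (1/2) sup_{(x,x') ∈ C̄(δ)} ∫ |q(z − (g(x) − g(x'))) − q(z)| dz. -/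
open MeasureTheory Set
open scoped ENNReal

/-!
For densities `f` and `h`, `f + h - |f - h| = 2 min (f, h)`, so `∫ |f - h| = 2 - 2 ∫ min (f, h)`:
the minorization says that `∫_A min (f, h)` bounds both `∫_A f` and `∫_A h` from below, and all
the work is in bounding `∫ |q (z - u) - q z|` away from `2` uniformly over the shifts
`u = g x - g x'`. For a single `u` this integral is less than `2` because an almost everywhere
positive density overlaps each of its translates. It is continuous in `u`, translation being
continuous in `L¹`, so the bound is uniform on compact sets; and the shifts that occur
lie in a ball of the given norm, which is compact.
-/

lemma add_sub_abs_sub_eq_two_mul_min (a b : ℝ) : a + b - |a - b| = 2 * min a b := by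
  rw [abs_sub_comm, ← two_nsmul_inf_eq_add_sub_abs_sub, nsmul_eq_mul, Nat.cast_ofNat]

section Overlap

variable {α : Type*} [MeasurableSpace α] {μ : Measure α} {f h : α → ℝ}

/-- The set function `ν` attached to two probability densities `f` and `h`: the measure with
density `f + h - |f - h|`, normalized to total mass one. It is only meaningful when
`∫ |f - h| < 2`; otherwise the densities are mutually singular and the quotient is `0 / 0`. -/
noncomputable def normalizedOverlap (μ : Measure α) (f h : α → ℝ) (A : Set α) : ℝ :=
  (∫ z in A, (f z + h z - |f z - h z|) ∂μ) / (2 - ∫ z, |f z - h z| ∂μ)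

lemma integral_add_sub_abs_sub (hf : Integrable f μ) (hh : Integrable h μ) :
    ∫ z, (f z + h z - |f z - h z|) ∂μ = ∫ z, f z ∂μ + ∫ z, h z ∂μ - ∫ z, |f z - h z| ∂μ := by
  have hsum : Integrable (fun z ↦ f z + h z) μ := hf.add hh
  have habs : Integrable (fun z ↦ |f z - h z|) μ := (hf.sub hh).abs
  rw [integral_sub hsum habs, integral_add hf hh]

lemma integral_abs_sub_lt_add_of_ae_pos [NeZero μ] (hf : Integrable f μ) (hh : Integrable h μ)
    (hf_pos : ∀ᵐ z ∂μ, 0 < f z) (hh_pos : ∀ᵐ z ∂μ, 0 < h z) :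
    ∫ z, |f z - h z| ∂μ < ∫ z, f z ∂μ + ∫ z, h z ∂μ := by
  have hpos : ∀ᵐ z ∂μ, 0 < f z + h z - |f z - h z| := by
    filter_upwards [hf_pos, hh_pos] with z hfz hhz
    rw [add_sub_abs_sub_eq_two_mul_min]
    exact mul_pos two_pos (lt_min hfz hhz)
  have hnonneg : 0 ≤ᵐ[μ] fun z ↦ f z + h z - |f z - h z| := hpos.mono fun _ ↦ le_of_lt
  rw [← sub_pos, ← integral_add_sub_abs_sub hf hh]
  refine (integral_nonneg_of_ae hnonneg).lt_of_ne' fun hzero ↦ ?_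
  rw [integral_eq_zero_iff_of_nonneg_ae hnonneg ((hf.add hh).sub (hf.sub hh).abs)] at hzero
  obtain ⟨z, hz_pos, hz⟩ := (hpos.and hzero).exists
  exact hz_pos.ne' hz

lemma normalizedOverlap_univ (hf : ∫ z, f z ∂μ = 1) (hh : ∫ z, h z ∂μ = 1)
    (hfh : ∫ z, |f z - h z| ∂μ < 2) : normalizedOverlap μ f h univ = 1 := by
  rw [normalizedOverlap, setIntegral_univ, integral_add_sub_abs_sub
    (integrable_of_integral_eq_one hf) (integrable_of_integral_eq_one hh), hf, hh,
    one_add_one_eq_two]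
  exact div_self (sub_pos.2 hfh).ne'

lemma mul_normalizedOverlap_le_min {ε : ℝ} (hf : Integrable f μ) (hh : Integrable h μ)
    (hf_nonneg : 0 ≤ᵐ[μ] f) (hh_nonneg : 0 ≤ᵐ[μ] h) (hfh : ∫ z, |f z - h z| ∂μ < 2)
    (hε : ε ≤ 1 - (1 / 2) * ∫ z, |f z - h z| ∂μ) (A : Set α) :
    ε * normalizedOverlap μ f h A ≤ min (∫ z in A, f z ∂μ) (∫ z in A, h z ∂μ) := by
  have hmin : Integrable (fun z ↦ min (f z) (h z)) μ := hf.inf hh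
  have hmin_nonneg : 0 ≤ ∫ z in A, min (f z) (h z) ∂μ :=
    integral_nonneg_of_ae <| ae_restrict_of_ae <| by
      filter_upwards [hf_nonneg, hh_nonneg] with z using le_min
  calc ε * normalizedOverlap μ f h A
      = ε * (2 * ∫ z in A, min (f z) (h z) ∂μ) / (2 - ∫ z, |f z - h z| ∂μ) := by
        simp_rw [normalizedOverlap, add_sub_abs_sub_eq_two_mul_min, integral_const_mul,
          mul_div_assoc]
    _ ≤ ∫ z in A, min (f z) (h z) ∂μ := by
        rw [div_le_iff₀ (sub_pos.2 hfh)]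
        linarith [mul_le_mul_of_nonneg_right hε hmin_nonneg]
    _ ≤ min (∫ z in A, f z ∂μ) (∫ z in A, h z ∂μ) :=
        le_min
          (integral_mono hmin.integrableOn hf.integrableOn fun _ ↦ min_le_left _ _)
          (integral_mono hmin.integrableOn hh.integrableOn fun _ ↦ min_le_right _ _)

end Overlap

section Translation

variable {E : Type*} [AddCommGroup E] [MeasurableSpace E] {μ : Measure E} {q : E → ℝ}

/-- The `L¹` distance between a density `q` and its translate by `u`, that is, twice the total
variation distance between the laws they define. -/
noncomputable def translateL1Dist (μ : Measure E) (q : E → ℝ) (u : E) : ℝ :=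
  ∫ z, |q (z - u) - q z| ∂μ

/-- The constant `ε` for transitions whose noise has density `q` with respect to `μ`, where `U` is
the set of differences `g x - g x'` over the pairs of states considered. It is meaningful when `U`
is nonempty and the translation distances over `U` are bounded, since otherwise the real supremum
is `0`. -/
noncomputable def couplingConstant (μ : Measure E) (q : E → ℝ) (U : Set E) : ℝ :=
  1 - (1 / 2) * sSup (translateL1Dist μ q '' U)

lemma couplingConstant_image {X : Type*} (q : E → ℝ) (v : X → E) (S : Set X) :
    couplingConstant μ q (v '' S) =
      1 - (1 / 2) * sSup {r : ℝ | ∃ p, p ∈ S ∧ r = ∫ z, |q (z - v p) - q z| ∂μ} := by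
  rw [couplingConstant]
  congr 3
  ext r
  simp only [image_image, mem_image, mem_ofPred_eq, translateL1Dist, eq_comm (b := r)]

lemma couplingConstant_le {U : Set E} (hU : BddAbove (translateL1Dist μ q '' U)) {u : E}
    (hu : u ∈ U) : couplingConstant μ q U ≤ 1 - (1 / 2) * translateL1Dist μ q u := by
  rw [couplingConstant]
  gcongr
  exact le_csSup hU (mem_image_of_mem _ hu)

variable [TopologicalSpace E] [IsTopologicalAddGroup E] [BorelSpace E] [μ.IsAddLeftInvariant]

lemma integral_abs_translate_sub_translate (q : E → ℝ) (a b : E) :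
    ∫ z, |q (z - a) - q (z - b)| ∂μ = translateL1Dist μ q (a - b) := by
  rw [translateL1Dist, ← integral_sub_right_eq_self (fun z ↦ |q (z - (a - b)) - q z|) b]
  simp only [sub_sub, add_sub_cancel]

lemma ae_pos_translate (hq_pos : ∀ᵐ z ∂μ, 0 < q z) (u : E) : ∀ᵐ z ∂μ, 0 < q (z - u) :=
  (measurePreserving_sub_right μ u).quasiMeasurePreserving.ae hq_pos

lemma translateL1Dist_lt_two (hq_pos : ∀ᵐ z ∂μ, 0 < q z) (hq_one : ∫ z, q z ∂μ = 1) (u : E) :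
    translateL1Dist μ q u < 2 := by
  have : NeZero μ := ⟨by rintro rfl; simp at hq_one⟩
  have hq : Integrable q μ := integrable_of_integral_eq_one hq_one
  calc translateL1Dist μ q u < ∫ z, q (z - u) ∂μ + ∫ z, q z ∂μ :=
        integral_abs_sub_lt_add_of_ae_pos (hq.comp_sub_right u) hq (ae_pos_translate hq_pos u)
          hq_pos
    _ = 2 := by rw [integral_sub_right_eq_self q u, hq_one, one_add_one_eq_two]

variable [IsLocallyFiniteMeasure μ] [μ.InnerRegularCompactLTTop]

lemma continuous_integral_norm_translate_sub {F : Type*} [NormedAddCommGroup F] {f : E → F}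
    (hf : Integrable f μ) : Continuous fun u ↦ ∫ z, ‖f (z - u) - f z‖ ∂μ := by
  let fL : Lp F 1 μ := (memLp_one_iff_integrable.2 hf).toLp f
  have hL1 (u : E) : ∫ z, ‖f (z - u) - f z‖ ∂μ = ‖(DomAddAct.mk (-u) +ᵥ fL) - fL‖ := by
    rw [L1.norm_eq_integral_norm]
    have hfL : fL =ᵐ[μ] f := MemLp.coeFn_toLp _
    refine integral_congr_ae ?_
    filter_upwards [Lp.coeFn_sub (DomAddAct.mk (-u) +ᵥ fL) fL,
      DomAddAct.vadd_Lp_ae_eq (DomAddAct.mk (-u)) fL, hfL,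
      (measurePreserving_add_left μ (-u)).quasiMeasurePreserving.ae hfL] with z hsub hvadd hz hzu
    rw [hsub, Pi.sub_apply, hvadd, hz, Equiv.symm_apply_apply, vadd_eq_add, hzu, neg_add_eq_sub]
  have : Fact ((1 : ℝ≥0∞) ≠ ∞) := ⟨ENNReal.one_ne_top⟩
  simp_rw [hL1]
  exact (((DomAddAct.continuous_mk.comp continuous_neg).vadd continuous_const).sub
    continuous_const).norm

lemma continuous_translateL1Dist (hq : Integrable q μ) : Continuous (translateL1Dist μ q) :=
  continuous_integral_norm_translate_sub hq

variable {U K : Set E}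

lemma bddAbove_translateL1Dist_image (hq : Integrable q μ) (hK : IsCompact K) (hUK : U ⊆ K) :
    BddAbove (translateL1Dist μ q '' U) :=
  (hK.bddAbove_image (continuous_translateL1Dist hq).continuousOn).mono (image_mono hUK)

lemma couplingConstant_pos (hq_pos : ∀ᵐ z ∂μ, 0 < q z) (hq_one : ∫ z, q z ∂μ = 1)
    (hU : U.Nonempty) (hK : IsCompact K) (hUK : U ⊆ K) : 0 < couplingConstant μ q U := by
  have hq : Integrable q μ := integrable_of_integral_eq_one hq_one
  have hsup : sSup (translateL1Dist μ q '' U) < 2 :=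
    calc sSup (translateL1Dist μ q '' U) ≤ sSup (translateL1Dist μ q '' K) :=
          csSup_le_csSup (bddAbove_translateL1Dist_image hq hK subset_rfl) (hU.image _)
            (image_mono hUK)
      _ < 2 := (hK.sSup_lt_iff_of_continuous (hU.mono hUK)
          (continuous_translateL1Dist hq).continuousOn 2).2
            fun u _ ↦ translateL1Dist_lt_two hq_pos hq_one u
  rw [couplingConstant]
  linarith

theorem coupling_set_autoregressive_general {X : Type*} {g : X → E} {S : Set (X × X)}
    (hq_pos : ∀ᵐ z ∂μ, 0 < q z) (hq_one : ∫ z, q z ∂μ = 1) (hS : S.Nonempty) (hK : IsCompact K)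
    (hSK : ∀ p ∈ S, g p.1 - g p.2 ∈ K) :
    0 < couplingConstant μ q ((fun p ↦ g p.1 - g p.2) '' S) ∧
    (∀ p ∈ S, normalizedOverlap μ (fun z ↦ q (z - g p.1)) (fun z ↦ q (z - g p.2)) univ = 1) ∧
    ∀ p ∈ S, ∀ A : Set E,
      couplingConstant μ q ((fun p ↦ g p.1 - g p.2) '' S) *
          normalizedOverlap μ (fun z ↦ q (z - g p.1)) (fun z ↦ q (z - g p.2)) A ≤
        min (∫ z in A, q (z - g p.1) ∂μ) (∫ z in A, q (z - g p.2) ∂μ) := by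
  have hUK : (fun p ↦ g p.1 - g p.2) '' S ⊆ K := image_subset_iff.2 hSK
  have hq : Integrable q μ := integrable_of_integral_eq_one hq_one
  have hlt (a b : E) : ∫ z, |q (z - a) - q (z - b)| ∂μ < 2 := by
    rw [integral_abs_translate_sub_translate]
    exact translateL1Dist_lt_two hq_pos hq_one _
  have hone (a : E) : ∫ z, q (z - a) ∂μ = 1 := by rw [integral_sub_right_eq_self q a, hq_one]
  have hnonneg (a : E) : 0 ≤ᵐ[μ] fun z ↦ q (z - a) :=
    (ae_pos_translate hq_pos a).mono fun _ ↦ le_of_lt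
  refine ⟨couplingConstant_pos hq_pos hq_one (hS.image _) hK hUK,
    fun p _ ↦ normalizedOverlap_univ (hone _) (hone _) (hlt _ _), fun p hp A ↦ ?_⟩
  refine mul_normalizedOverlap_le_min (hq.comp_sub_right _) (hq.comp_sub_right _)
    (hnonneg _) (hnonneg _) (hlt _ _) ?_ A
  rw [integral_abs_translate_sub_translate]
  exact couplingConstant_le (bddAbove_translateL1Dist_image hq hK hUK) ⟨p, hp, rfl⟩

end Translation

section FiniteDimensional

variable {E : Type*} [NormedAddCommGroup E] [NormedSpace ℝ E] [FiniteDimensional ℝ E]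

lemma continuous_seminorm_of_finiteDimensional (p : Seminorm ℝ E) : Continuous p :=
  p.convexOn.locallyLipschitz.continuous

lemma exists_mul_norm_le_seminorm (p : Seminorm ℝ E) (hp : ∀ x, p x = 0 → x = 0) :
    ∃ c > 0, ∀ x, c * ‖x‖ ≤ p x := by
  have : ProperSpace E := FiniteDimensional.proper_real E
  obtain ⟨c, hc, hcp⟩ := (isCompact_sphere (0 : E) 1).exists_forall_le'
    (continuous_seminorm_of_finiteDimensional p).continuousOn fun x hx ↦
      (apply_nonneg p x).lt_of_ne' fun hpx ↦ ne_zero_of_mem_unit_sphere ⟨x, hx⟩ (hp x hpx)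
  refine ⟨c, hc, fun x ↦ ?_⟩
  rcases eq_or_ne x 0 with rfl | hx
  · simp
  have hunit : c ≤ p (‖x‖⁻¹ • x) := hcp _ <| by
    rw [mem_sphere_zero_iff_norm, norm_smul, norm_inv, norm_norm,
      inv_mul_cancel₀ (norm_ne_zero_iff.2 hx)]
  rwa [map_smul_eq_mul, norm_inv, norm_norm, inv_mul_eq_div, le_div_iff₀ (norm_pos_iff.2 hx)]
    at hunit

lemma isCompact_setOf_seminorm_le (p : Seminorm ℝ E) (hp : ∀ x, p x = 0 → x = 0) (r : ℝ) :
    IsCompact {x | p x ≤ r} := by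
  have : ProperSpace E := FiniteDimensional.proper_real E
  obtain ⟨c, hc, hcp⟩ := exists_mul_norm_le_seminorm p hp
  refine (isCompact_closedBall (0 : E) (r / c)).of_isClosed_subset
    (isClosed_le (continuous_seminorm_of_finiteDimensional p) continuous_const) fun x hx ↦ ?_
  rw [mem_closedBall_zero_iff, le_div_iff₀' hc]
  exact (hcp x).trans hx

end FiniteDimensional

/-- The functional-autoregressive example: for the chain `X_{k+1} = g(X_k) + Z_k` on `ℝ^d`
with `g` Lipschitz (for a norm `nn`) with constant `L < 1` and i.i.d. noise with continuous,
everywhere positive density `q`, every set `C̄(δ) = {(x,x') : nn(x - x') ≤ δ}` is a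
`(1, ε(δ))`-coupling set, with `ε(δ)` and `ν_{x,x'}` as in (23). -/
theorem coupling_set_autoregressive
    (d : ℕ) (g : (Fin d → ℝ) → (Fin d → ℝ)) (q : (Fin d → ℝ) → ℝ)
    -- `nn` is a norm on ℝ^d
    (nn : (Fin d → ℝ) → ℝ)
    (hnn0 : ∀ x, nn x = 0 ↔ x = 0)
    (hnnadd : ∀ x y, nn (x + y) ≤ nn x + nn y)
    (hnnsmul : ∀ (a : ℝ) x, nn (a • x) = |a| * nn x)
    -- `g` is Lipschitz with constant `L < 1`
    (L : ℝ) (hL0 : 0 ≤ L) (hL1 : L < 1)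
    (hLip : ∀ x y, nn (g x - g y) ≤ L * nn (x - y))
    -- `q` is a continuous, everywhere positive probability density
    (hqc : Continuous q) (hqpos : ∀ z, 0 < q z) (hqint : ∫ z, q z = 1)
    (δ : ℝ) (hδ : 0 < δ) :
    -- ε(δ) > 0
    0 < 1 - (1 / 2) * sSup {r : ℝ | ∃ p : (Fin d → ℝ) × (Fin d → ℝ),
        nn (p.1 - p.2) ≤ δ ∧ r = ∫ z, |q (z - (g p.1 - g p.2)) - q z|} ∧
    -- the measures ν_{x,x'} of (23) are probability measures on C̄(δ)
    (∀ p : (Fin d → ℝ) × (Fin d → ℝ), nn (p.1 - p.2) ≤ δ →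
      (∫ z, (q (z - g p.1) + q (z - g p.2) - |q (z - g p.1) - q (z - g p.2)|)) /
        (2 - ∫ z, |q (z - g p.1) - q (z - g p.2)|) = 1) ∧
    -- minorization: P(x,A) ∧ P(x',A) ≥ ε(δ) ν_{x,x'}(A) for (x,x') ∈ C̄(δ)
    (∀ p : (Fin d → ℝ) × (Fin d → ℝ), nn (p.1 - p.2) ≤ δ →
      ∀ A : Set (Fin d → ℝ), MeasurableSet A →
        (1 - (1 / 2) * sSup {r : ℝ | ∃ p' : (Fin d → ℝ) × (Fin d → ℝ),
            nn (p'.1 - p'.2) ≤ δ ∧ r = ∫ z, |q (z - (g p'.1 - g p'.2)) - q z|}) *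
          ((∫ z in A, (q (z - g p.1) + q (z - g p.2) - |q (z - g p.1) - q (z - g p.2)|)) /
            (2 - ∫ z, |q (z - g p.1) - q (z - g p.2)|)) ≤
        min (∫ y in A, q (y - g p.1)) (∫ y in A, q (y - g p.2))) := by
  let N : Seminorm ℝ (Fin d → ℝ) := Seminorm.of nn hnnadd hnnsmul
  obtain ⟨hε, hν, hmin⟩ := coupling_set_autoregressive_general (μ := volume) (g := g)
    (S := {p | nn (p.1 - p.2) ≤ δ}) (.of_forall hqpos) hqint
    ⟨(0, 0), by simpa [(hnn0 0).2 rfl] using hδ.le⟩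
    (isCompact_setOf_seminorm_le N (fun x ↦ (hnn0 x).1) (L * δ))
    fun _ hp ↦ (hLip _ _).trans (mul_le_mul_of_nonneg_left hp hL0)
  rw [couplingConstant_image] at hε hmin
  exact ⟨hε, fun p hp ↦ by simpa only [normalizedOverlap, setIntegral_univ] using hν p hp,
    fun p hp A _ ↦ hmin p hp A⟩
end

section
/- For all λ with ‖g‖_Lip < λ < 1, all δ > (1−λ)/(λ − ‖g‖_Lip), all n ≥ 1, all j ∈ {1, …, n+1}, and all probability measures ξ, ξ' on ℝ^d: ‖ξP^n − ξ'P^n‖_TV ≤ 2(1−ε(δ))^j 1(j ≤ n) + 2 λ^n B^{j−1} (1 + ∫∫ ξ(dx) ξ'(dx') ‖x − x'‖), where B = max(1, λ^{-1}(1 + ‖g‖_Lip δ − ε(δ))). -/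
/-!
The proof is the dual, function-space form of a coupling argument. Suppose that `f` has modulus
`f x - f y ≤ a + b ‖x - y‖`. The infimal convolution of `f` with `b ‖·‖`, shifted up by `a / 2`,
is `b`-Lipschitz and within `a / 2` of `f`. Integrating the Lipschitz part against the same noise
at `x` and at `y`, and comparing the two transition densities on the remainder, gives
`P f x - P f y ≤ a τ(x, y) + b L ‖x - y‖`, where `τ(x, y)` is half the `L¹` distance between the
transition densities. It is as if the chains from `x` and `y` could be coupled so as to meet with
probability `1 - τ(x, y)` and, at the same time, to approach each other by the factor `L` in mean.

Iterating, a pair at distance at most `δ` has `τ ≤ 1 - ε(δ)` and raises `1 + ‖x - y‖` by at most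
the factor `λ B`, whereas a pair further apart contracts `1 + ‖x - y‖` by `λ`. Counting at most
`j` visits to the near region gives the two terms of the bound.
-/


open MeasureTheory ProbabilityTheory Set
open scoped ENNReal

section LipschitzApproximation

theorem exists_sub_le_and_abs_sub_le_half {α : Type*} {c : α → α → ℝ} (hc0 : ∀ x, c x x = 0)
    (hc_tri : ∀ x y z, c x z ≤ c x y + c y z) {f : α → ℝ} {a : ℝ}
    (hf : ∀ x y, f x - f y ≤ a + c x y) :
    ∃ h : α → ℝ, (∀ x y, h x - h y ≤ c x y) ∧ ∀ x, |f x - h x| ≤ a / 2 := by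
  let infConv : α → ℝ := fun x => ⨅ y, f y + c x y
  have hbdd (x : α) : BddBelow (range fun y => f y + c x y) :=
    ⟨f x - a, by rintro _ ⟨y, rfl⟩; linarith [hf x y]⟩
  have hle (x y : α) : infConv x ≤ f y + c x y := ciInf_le (hbdd x) y
  have hlower (x : α) : f x - a ≤ infConv x :=
    have : Nonempty α := ⟨x⟩
    le_ciInf fun y => by linarith [hf x y]
  have hlip (x y : α) : infConv x - c x y ≤ infConv y :=
    have : Nonempty α := ⟨x⟩
    le_ciInf fun z => by linarith [hle x z, hc_tri x y z]
  refine ⟨fun x => infConv x + a / 2, fun x y => by linarith [hlip x y], fun x => ?_⟩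
  have hupper : infConv x ≤ f x := by simpa [hc0] using hle x x
  exact abs_le.2 ⟨by linarith, by linarith [hlower x]⟩

theorem continuous_of_sub_le_mul_addGroupSeminorm {E : Type*} [AddGroup E] [TopologicalSpace E]
    [ContinuousSub E] {p : AddGroupSeminorm E} (hp : Continuous p) {F : E → ℝ} {b : ℝ}
    (hF : ∀ x y, F x - F y ≤ b * p (x - y)) : Continuous F := by
  refine continuous_iff_continuousAt.2 fun x => tendsto_iff_dist_tendsto_zero.2 ?_
  have hlim : Filter.Tendsto (fun y => b * p (y - x)) (nhds x) (nhds 0) := by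
    have hcont : Continuous fun y => b * p (y - x) := by fun_prop
    simpa using hcont.tendsto x
  refine squeeze_zero (fun _ => dist_nonneg) (fun y => ?_) hlim
  rw [Real.dist_eq]
  exact abs_sub_le_iff.2 ⟨hF y x, by simpa only [map_sub_rev p x y] using hF x y⟩

end LipschitzApproximation

section MarkovOperator

variable {X : Type*} [MeasurableSpace X]

/-- The Markov operator `f ↦ P f` of a kernel `P`, acting on real functions. -/
noncomputable def markovOp (P : Kernel X X) (f : X → ℝ) : X → ℝ := fun x => ∫ y, f y ∂(P x)

theorem measurable_markovOp_iterate (P : Kernel X X) {f : X → ℝ} (hf : Measurable f) (n : ℕ) :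
    Measurable ((markovOp P)^[n] f) := by
  induction n with
  | zero => exact hf
  | succ n ih =>
    rw [Function.iterate_succ_apply']
    exact (ih.stronglyMeasurable.integral_kernel (κ := P)).measurable

theorem abs_markovOp_iterate_le (P : Kernel X X) [IsMarkovKernel P] {f : X → ℝ} {C : ℝ}
    (hf : ∀ x, |f x| ≤ C) (n : ℕ) (x : X) : |(markovOp P)^[n] f x| ≤ C := by
  induction n generalizing x with
  | zero => exact hf x
  | succ n ih =>
    rw [Function.iterate_succ_apply']
    simpa [markovOp] using norm_integral_le_of_norm_le_const (μ := P x)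
      (f := (markovOp P)^[n] f) (C := C) (.of_forall ih)

theorem markovOp_iterate_sub_le_two_mul (P : Kernel X X) [IsMarkovKernel P] {f : X → ℝ} {C : ℝ}
    (hf : ∀ x, |f x| ≤ C) (n : ℕ) (x y : X) :
    (markovOp P)^[n] f x - (markovOp P)^[n] f y ≤ 2 * C := by
  have hx := abs_le.1 (abs_markovOp_iterate_le P hf n x)
  have hy := abs_le.1 (abs_markovOp_iterate_le P hf n y)
  linarith

theorem integral_iterMeas (P : Kernel X X) (ξ : Measure X) (n : ℕ) {f : X → ℝ}
    (hf : Integrable f (iterMeas P ξ n)) :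
    ∫ x, f x ∂(iterMeas P ξ n) = ∫ x, (markovOp P)^[n] f x ∂ξ := by
  induction n generalizing f with
  | zero => rfl
  | succ n ih =>
    change Integrable f (P ∘ₘ iterMeas P ξ n) at hf
    change ∫ x, f x ∂(P ∘ₘ iterMeas P ξ n) = _
    rw [Measure.comp_eq_comp_const_apply] at hf ⊢
    rw [Kernel.integral_comp hf, Kernel.const_apply, Function.iterate_succ_apply]
    exact ih (by simpa only [Kernel.const_apply] using hf.integral_comp)

theorem ofReal_abs_integral_sub_integral_le {ξ ξ' : Measure X} [IsProbabilityMeasure ξ]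
    [IsProbabilityMeasure ξ'] {F : X → ℝ} (hF : Integrable F ξ) (hF' : Integrable F ξ') :
    ENNReal.ofReal |∫ x, F x ∂ξ - ∫ x, F x ∂ξ'| ≤
      ∫⁻ p, ENNReal.ofReal |F p.1 - F p.2| ∂(ξ.prod ξ') := by
  have hprod : ∫ x, F x ∂ξ - ∫ x, F x ∂ξ' = ∫ p, (F p.1 - F p.2) ∂(ξ.prod ξ') := by
    rw [integral_sub (hF.comp_fst ξ') (hF'.comp_snd ξ), integral_fun_fst, integral_fun_snd]
    simp
  simpa only [hprod, Real.enorm_eq_ofReal_abs] using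
    enorm_integral_le_lintegral_enorm (μ := ξ.prod ξ') fun p => F p.1 - F p.2

theorem fDist_one_iterMeas_le (P : Kernel X X) [IsMarkovKernel P] {c : X → X → ℝ}
    (hc : ∀ x y, 0 ≤ c x y) (hc_symm : ∀ x y, c x y = c y x) {a k : ℝ} (hk : 0 ≤ k) {n : ℕ}
    (hosc : ∀ φ : X → ℝ, Measurable φ → (∀ x, |φ x| ≤ 1) → ∀ x y,
      (markovOp P)^[n] φ x - (markovOp P)^[n] φ y ≤ a + k * (1 + c x y))
    (ξ ξ' : Measure X) [IsProbabilityMeasure ξ] [IsProbabilityMeasure ξ'] :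
    fDist (fun _ => 1) (iterMeas P ξ n) (iterMeas P ξ' n) ≤
      ENNReal.ofReal a +
        ENNReal.ofReal k * (1 + ∫⁻ p, ENNReal.ofReal (c p.1 p.2) ∂(ξ.prod ξ')) := by
  refine iSup₂_le fun φ hφ => iSup₂_le fun hφ1 hφξ => iSup_le fun hφξ' => ?_
  rw [integral_iterMeas P ξ n hφξ, integral_iterMeas P ξ' n hφξ']
  set F := (markovOp P)^[n] φ
  have hF (μ : Measure X) [IsProbabilityMeasure μ] : Integrable F μ :=
    .of_bound (measurable_markovOp_iterate P hφ n).aestronglyMeasurable 1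
      (.of_forall (abs_markovOp_iterate_le P hφ1 n))
  have hF_osc (x y : X) : |F x - F y| ≤ a + k * (1 + c x y) :=
    abs_sub_le_iff.2 ⟨hosc φ hφ hφ1 x y, hc_symm x y ▸ hosc φ hφ hφ1 y x⟩
  calc ENNReal.ofReal |∫ x, F x ∂ξ - ∫ x, F x ∂ξ'|
      ≤ ∫⁻ p, ENNReal.ofReal |F p.1 - F p.2| ∂(ξ.prod ξ') :=
        ofReal_abs_integral_sub_integral_le (hF ξ) (hF ξ')
    _ ≤ ∫⁻ p, (ENNReal.ofReal a + ENNReal.ofReal k * (1 + ENNReal.ofReal (c p.1 p.2)))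
          ∂(ξ.prod ξ') := by
        refine lintegral_mono fun p => ?_
        refine (ENNReal.ofReal_le_ofReal (hF_osc p.1 p.2)).trans (ENNReal.ofReal_add_le.trans ?_)
        rw [ENNReal.ofReal_mul hk, ENNReal.ofReal_add zero_le_one (hc _ _), ENNReal.ofReal_one]
    _ = _ := by
        rw [lintegral_add_left measurable_const, lintegral_const_mul' _ _ ENNReal.ofReal_ne_top,
          lintegral_add_left measurable_const]
        simp

end MarkovOperator

section Smoothing

variable {X : Type*} [MeasurableSpace X]

/-- The estimate satisfied by `P` if, for all `x` and `y`, there is a coupling of `P x` and `P y`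
under which the two points differ with probability at most `τ x y` and have mean cost at most
`L * c x y`. It is stated in dual form, on bounded functions of modulus `a + b * c`, so that no
coupling has to be constructed. -/
def IsSmoothing (P : Kernel X X) (c τ : X → X → ℝ) (L : ℝ) : Prop :=
  ∀ ⦃f : X → ℝ⦄ ⦃a b : ℝ⦄, Measurable f → (∃ C, ∀ x, |f x| ≤ C) → 0 ≤ b →
    (∀ x y, f x - f y ≤ a + b * c x y) →
    ∀ x y, markovOp P f x - markovOp P f y ≤ a * τ x y + b * (L * c x y)

theorem IsSmoothing.markovOp_sub_le {P : Kernel X X} {c τ : X → X → ℝ} {L : ℝ}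
    (hP : IsSmoothing P c τ L) {f : X → ℝ} (hf : Measurable f) (hf_bdd : ∃ C, ∀ x, |f x| ≤ C)
    {a k : ℝ} (ha : 0 ≤ a) (hk : 0 ≤ k) (hosc : ∀ x y, f x - f y ≤ a + k * (1 + c x y))
    {x y : X} {t r : ℝ} (hτ : τ x y ≤ t) (hdrift : τ x y + L * c x y ≤ r * (1 + c x y)) :
    markovOp P f x - markovOp P f y ≤ a * t + k * (r * (1 + c x y)) :=
  calc markovOp P f x - markovOp P f y ≤ (a + k) * τ x y + k * (L * c x y) :=
        hP hf hf_bdd hk (fun x y => by linarith [hosc x y]) x y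
    _ = a * τ x y + k * (τ x y + L * c x y) := by ring
    _ ≤ a * t + k * (r * (1 + c x y)) := by gcongr

/-- The first term `2 e ^ j 1(j ≤ n)` of the total variation bound, where `e = 1 - ε(δ)` bounds
the probability that an attempt at coalescence fails. -/
noncomputable def failureBound (e : ℝ) (n j : ℕ) : ℝ := if j ≤ n then 2 * e ^ j else 0

theorem failureBound_nonneg {e : ℝ} (he : 0 ≤ e) (n j : ℕ) : 0 ≤ failureBound e n j := by
  unfold failureBound
  split_ifs <;> positivity

theorem failureBound_le_succ {e : ℝ} (he : 0 ≤ e) (n j : ℕ) :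
    failureBound e n j ≤ failureBound e (n + 1) j := by
  by_cases hj : j ≤ n
  · simp [failureBound, hj, Nat.le_succ_of_le hj]
  · simpa [failureBound, hj] using failureBound_nonneg he (n + 1) j

theorem failureBound_succ_succ (e : ℝ) (n j : ℕ) :
    failureBound e (n + 1) (j + 1) = failureBound e n j * e := by
  simp only [failureBound, add_le_add_iff_right, ite_mul, zero_mul]
  ring_nf

theorem IsSmoothing.markovOp_iterate_sub_le {P : Kernel X X} [IsMarkovKernel P]
    {c τ : X → X → ℝ} {L : ℝ} (hP : IsSmoothing P c τ L) (hc : ∀ x y, 0 ≤ c x y)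
    {e lam B : ℝ} (he : 0 ≤ e) (hlam : 0 ≤ lam) (hB : 1 ≤ B)
    (hdrift : ∀ x y, (τ x y ≤ e ∧ τ x y + L * c x y ≤ lam * B * (1 + c x y)) ∨
      (τ x y ≤ 1 ∧ τ x y + L * c x y ≤ lam * (1 + c x y)))
    {φ : X → ℝ} (hφ : Measurable φ) (hφ1 : ∀ x, |φ x| ≤ 1) (n j : ℕ) (x y : X) :
    (markovOp P)^[n] φ x - (markovOp P)^[n] φ y ≤
      failureBound e n (j + 1) + 2 * lam ^ n * B ^ j * (1 + c x y) := by
  have hosc := markovOp_iterate_sub_le_two_mul P hφ1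
  have hk (n j : ℕ) : 0 ≤ 2 * lam ^ n * B ^ j := by positivity
  have hc1 (x y : X) : 0 ≤ 1 + c x y := by linarith [hc x y]
  induction n generalizing j x y with
  | zero =>
    have hBj : 1 ≤ B ^ j := one_le_pow₀ hB
    have hmass : 1 ≤ B ^ j * (1 + c x y) :=
      one_le_mul_of_one_le_of_one_le hBj (by linarith [hc x y])
    linarith [hosc 0 x y, failureBound_nonneg he 0 (j + 1)]
  | succ n ih =>
    rw [Function.iterate_succ_apply']
    have hstep {a k t r : ℝ} :=
      hP.markovOp_sub_le (a := a) (k := k) (x := x) (y := y) (t := t) (r := r)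
        (measurable_markovOp_iterate P hφ n) ⟨1, abs_markovOp_iterate_le P hφ1 n⟩
    have hfail := failureBound_nonneg he n
    rcases hdrift x y with ⟨hτ, hnear⟩ | ⟨hτ, hfar⟩
    · cases j with
      | zero =>
        -- With no near visit left to spend, the oscillation bound `2` replaces `ih`.
        have hterm := mul_nonneg (hk (n + 1) 0) (hc1 x y)
        have htwo : failureBound e n 0 = 2 := by simp [failureBound]
        rw [failureBound_succ_succ, htwo]
        linarith [hstep zero_le_two le_rfl (fun x y => by linarith [hosc n x y]) hτ hnear]
      | succ j =>
        refine (hstep (hfail (j + 1)) (hk n j) (ih j) hτ hnear).trans_eq ?_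
        rw [failureBound_succ_succ]
        ring
    · refine (hstep (hfail (j + 1)) (hk n j) (ih j) hτ hfar).trans ?_
      rw [pow_succ]
      linarith [failureBound_le_succ he n (j + 1)]

theorem near_or_far_drift {L lam δ ε τ t : ℝ} (hL : 0 ≤ L) (hlam : L < lam)
    (hδ : (1 - lam) / (lam - L) < δ) (ht : 0 ≤ t) (hτ_near : t ≤ δ → τ ≤ 1 - ε) (hτ : τ ≤ 1) :
    (τ ≤ 1 - ε ∧ τ + L * t ≤ lam * max 1 (lam⁻¹ * (1 + L * δ - ε)) * (1 + t)) ∨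
      (τ ≤ 1 ∧ τ + L * t ≤ lam * (1 + t)) := by
  have hlam0 : 0 < lam := hL.trans_lt hlam
  rcases le_or_gt t δ with htδ | htδ
  · refine .inl ⟨hτ_near htδ, ?_⟩
    calc τ + L * t ≤ 1 - ε + L * δ := by gcongr; exact hτ_near htδ
      _ = lam * (lam⁻¹ * (1 + L * δ - ε)) := by rw [mul_inv_cancel_left₀ hlam0.ne']; ring
      _ ≤ lam * max 1 (lam⁻¹ * (1 + L * δ - ε)) := by gcongr; exact le_max_right _ _
      _ ≤ lam * max 1 (lam⁻¹ * (1 + L * δ - ε)) * (1 + t) :=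
        le_mul_of_one_le_right (by positivity) (by linarith)
  · have hcontract := (div_lt_iff₀ (sub_pos.2 hlam)).1 (hδ.trans htδ)
    exact .inr ⟨hτ, by linarith⟩

end Smoothing

section Autoregressive

variable {E : Type*} [AddCommGroup E] [MeasurableSpace E]

/-- The law of `u + Z`, where `Z` has density `q` with respect to `μ`. -/
noncomputable def translateLaw (μ : Measure E) (q : E → ℝ) (u : E) : Measure E :=
  μ.withDensity fun y => ENNReal.ofReal (q (y - u))

/-- The `L¹` distance between `q` and its translate by `w`: the total variation norm of the
difference of the laws of `Z` and `w + Z`, where `Z` has density `q`. -/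
noncomputable def translationDist (μ : Measure E) (q : E → ℝ) (w : E) : ℝ :=
  ∫ z, |q (z - w) - q z| ∂μ

/-- The minorization constant `ε(δ)`: the least overlap of the transition densities at two points
at distance at most `δ`, for the seminorm `p`. -/
noncomputable def minOverlap (μ : Measure E) (q : E → ℝ) (g : E → E) (p : AddGroupSeminorm E)
    (δ : ℝ) : ℝ :=
  1 - (1 / 2) * sSup {r : ℝ | ∃ x : E × E, p (x.1 - x.2) ≤ δ ∧
    r = translationDist μ q (g x.1 - g x.2)}

theorem minOverlap_le_one (μ : Measure E) (q : E → ℝ) (g : E → E) (p : AddGroupSeminorm E)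
    (δ : ℝ) : minOverlap μ q g p δ ≤ 1 := by
  have hsup : 0 ≤ sSup {r : ℝ | ∃ x : E × E, p (x.1 - x.2) ≤ δ ∧
      r = translationDist μ q (g x.1 - g x.2)} := by
    refine Real.sSup_nonneg ?_
    rintro _ ⟨x, -, rfl⟩
    exact integral_nonneg fun z => abs_nonneg _
  unfold minOverlap
  linarith

variable [MeasurableAdd E] {μ : Measure E} [μ.IsAddRightInvariant] {q : E → ℝ}

theorem integral_abs_sub_translate_eq_translationDist (u v : E) :
    ∫ y, |q (y - u) - q (y - v)| ∂μ = translationDist μ q (u - v) := by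
  rw [← integral_add_right_eq_self (fun y => |q (y - u) - q (y - v)|) v]
  simp only [translationDist, add_sub_cancel_right, sub_sub_eq_add_sub]

theorem translationDist_le_two (hq0 : ∀ z, 0 ≤ q z) (hq1 : ∫ z, q z ∂μ = 1) (w : E) :
    translationDist μ q w ≤ 2 := by
  have hq := integrable_of_integral_eq_one hq1
  have hqw := hq.comp_sub_right w
  calc translationDist μ q w ≤ ∫ z, (q (z - w) + q z) ∂μ := by
        refine integral_mono (hqw.sub hq).abs (hqw.add hq) fun z => ?_
        exact abs_le.2 ⟨by linarith [hq0 (z - w)], by linarith [hq0 z]⟩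
    _ = 2 := by
        rw [integral_add hqw hq, integral_sub_right_eq_self q w, hq1, one_add_one_eq_two]

theorem half_translationDist_le_one_sub_minOverlap (hq0 : ∀ z, 0 ≤ q z) (hq1 : ∫ z, q z ∂μ = 1)
    {g : E → E} {p : AddGroupSeminorm E} {δ : ℝ} {x y : E} (hxy : p (x - y) ≤ δ) :
    1 / 2 * translationDist μ q (g x - g y) ≤ 1 - minOverlap μ q g p δ := by
  rw [minOverlap, sub_sub_cancel]
  gcongr
  refine le_csSup ⟨2, ?_⟩ ⟨(x, y), hxy, rfl⟩
  rintro _ ⟨x, -, rfl⟩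
  exact translationDist_le_two hq0 hq1 _

theorem isProbabilityMeasure_translateLaw (hq0 : ∀ z, 0 ≤ q z) (hq1 : ∫ z, q z ∂μ = 1) (u : E) :
    IsProbabilityMeasure (translateLaw μ q u) := by
  refine ⟨?_⟩
  rw [translateLaw, withDensity_apply _ .univ, setLIntegral_univ,
    lintegral_sub_right_eq_self (fun y => ENNReal.ofReal (q y)) u,
    ← ofReal_integral_eq_lintegral_ofReal (integrable_of_integral_eq_one hq1) (.of_forall hq0),
    hq1, ENNReal.ofReal_one]

theorem integral_translateLaw (hq0 : ∀ z, 0 ≤ q z) (hq : Integrable q μ) (f : E → ℝ) (u : E) :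
    ∫ y, f y ∂(translateLaw μ q u) = ∫ y, q (y - u) * f y ∂μ := by
  rw [translateLaw, integral_withDensity_eq_integral_toReal_smul₀
    (hq.comp_sub_right u).aemeasurable.ennreal_ofReal (by simp)]
  simp only [ENNReal.toReal_ofReal (hq0 _), smul_eq_mul]

theorem abs_integral_translateLaw_sub_le (hq0 : ∀ z, 0 ≤ q z) (hq : Integrable q μ)
    {r : E → ℝ} (hr : Measurable r) {C : ℝ} (hrC : ∀ y, |r y| ≤ C) (u v : E) :
    |∫ y, r y ∂(translateLaw μ q u) - ∫ y, r y ∂(translateLaw μ q v)| ≤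
      C * translationDist μ q (u - v) := by
  have hint (w : E) : Integrable (fun y => q (y - w) * r y) μ :=
    (hq.comp_sub_right w).mul_bdd hr.aestronglyMeasurable (.of_forall hrC)
  rw [integral_translateLaw hq0 hq, integral_translateLaw hq0 hq, ← integral_sub (hint u) (hint v),
    ← integral_abs_sub_translate_eq_translationDist, ← integral_const_mul]
  refine abs_integral_le_integral_abs.trans ?_
  refine integral_mono ((hint u).sub (hint v)).abs
    (((hq.comp_sub_right u).sub (hq.comp_sub_right v)).abs.const_mul C) fun y => ?_
  calc |q (y - u) * r y - q (y - v) * r y| = |r y| * |q (y - u) - q (y - v)| := by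
        rw [← sub_mul, abs_mul, mul_comm]
    _ ≤ C * |q (y - u) - q (y - v)| := by gcongr; exact hrC y

theorem integral_translateLaw_sub_le (hq0 : ∀ z, 0 ≤ q z) (hq1 : ∫ z, q z ∂μ = 1) {h : E → ℝ}
    (hh : Measurable h) {C : ℝ} (hhC : ∀ y, |h y| ≤ C) {u v : E} {K : ℝ}
    (hK : ∀ z, h (z + u) - h (z + v) ≤ K) :
    ∫ y, h y ∂(translateLaw μ q u) - ∫ y, h y ∂(translateLaw μ q v) ≤ K := by
  have hq := integrable_of_integral_eq_one hq1
  have hint (w : E) : Integrable (fun z => q z * h (z + w)) μ :=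
    hq.mul_bdd (hh.comp (measurable_add_const w)).aestronglyMeasurable
      (.of_forall fun z => hhC (z + w))
  have hshift (w : E) : ∫ y, h y ∂(translateLaw μ q w) = ∫ z, q z * h (z + w) ∂μ := by
    rw [integral_translateLaw hq0 hq, ← integral_add_right_eq_self _ w]
    simp only [add_sub_cancel_right]
  calc ∫ y, h y ∂(translateLaw μ q u) - ∫ y, h y ∂(translateLaw μ q v)
      = ∫ z, (q z * h (z + u) - q z * h (z + v)) ∂μ := by
        rw [hshift, hshift, integral_sub (hint u) (hint v)]
    _ ≤ ∫ z, q z * K ∂μ := by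
        refine integral_mono ((hint u).sub (hint v)) (hq.mul_const K) fun z => ?_
        dsimp only
        rw [← mul_sub]
        exact mul_le_mul_of_nonneg_left (hK z) (hq0 z)
    _ = K := by rw [integral_mul_const, hq1, one_mul]

end Autoregressive

section AutoregressiveChain

variable {E : Type*} [AddCommGroup E] [TopologicalSpace E] [IsTopologicalAddGroup E]
  [MeasurableSpace E] [BorelSpace E] {μ : Measure E} [μ.IsAddRightInvariant] {q : E → ℝ}
  {g : E → E} {p : AddGroupSeminorm E} {L : ℝ} {P : Kernel E E}

theorem isSmoothing_of_eq_translateLaw (hp : Continuous p)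
    (hg : ∀ x y, p (g x - g y) ≤ L * p (x - y))
    (hq0 : ∀ z, 0 ≤ q z) (hq1 : ∫ z, q z ∂μ = 1) (hP : ∀ x, P x = translateLaw μ q (g x)) :
    IsSmoothing P (fun x y => p (x - y))
      (fun x y => 1 / 2 * translationDist μ q (g x - g y)) L := by
  rintro f a b hf ⟨C, hfC⟩ hb hosc x y
  have hq := integrable_of_integral_eq_one hq1
  have hprob := isProbabilityMeasure_translateLaw hq0 hq1
  obtain ⟨h, hlip, happrox⟩ := exists_sub_le_and_abs_sub_le_half (c := fun x y => b * p (x - y))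
    (by simp) (fun x y z => by
      rw [← mul_add]
      exact mul_le_mul_of_nonneg_left (le_map_sub_add_map_sub p x y z) hb) hosc
  have hh : Measurable h := (continuous_of_sub_le_mul_addGroupSeminorm hp hlip).measurable
  have hhC (z : E) : |h z| ≤ C + a / 2 := by
    have hfz := abs_le.1 (hfC z)
    have hfh := abs_le.1 (happrox z)
    exact abs_le.2 ⟨by linarith, by linarith⟩
  have hsplit (u : E) : ∫ z, f z ∂(translateLaw μ q u) =
      ∫ z, (f z - h z) ∂(translateLaw μ q u) + ∫ z, h z ∂(translateLaw μ q u) := by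
    rw [← integral_add (f := fun z => f z - h z)
      (.of_bound (hf.sub hh).aestronglyMeasurable _ (.of_forall happrox))
      (.of_bound hh.aestronglyMeasurable _ (.of_forall hhC))]
    simp only [sub_add_cancel]
  have hremainder := (abs_le.1 <|
    abs_integral_translateLaw_sub_le hq0 hq (hf.sub hh) happrox (g x) (g y)).2
  have hlipschitz : ∫ z, h z ∂(translateLaw μ q (g x)) - ∫ z, h z ∂(translateLaw μ q (g y)) ≤
      b * (L * p (x - y)) := by
    refine integral_translateLaw_sub_le hq0 hq1 hh hhC fun z => (hlip _ _).trans ?_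
    rw [add_sub_add_left_eq_sub]
    exact mul_le_mul_of_nonneg_left (hg x y) hb
  simp only [Pi.sub_apply] at hremainder
  simp only [markovOp, hP, hsplit]
  linarith

theorem total_variation_bound_autoregressive_general (hp : Continuous p)
    (hL : 0 ≤ L) (hg : ∀ x y, p (g x - g y) ≤ L * p (x - y))
    (hq0 : ∀ z, 0 ≤ q z) (hq1 : ∫ z, q z ∂μ = 1) (hP : ∀ x, P x = translateLaw μ q (g x))
    {lam δ : ℝ} (hlam : L < lam) (hδ : (1 - lam) / (lam - L) < δ) (n : ℕ) {j : ℕ} (hj : 1 ≤ j)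
    (ξ ξ' : Measure E) [IsProbabilityMeasure ξ] [IsProbabilityMeasure ξ'] :
    fDist (fun _ => 1) (iterMeas P ξ n) (iterMeas P ξ' n) ≤
      (if j ≤ n then ENNReal.ofReal (2 * (1 - minOverlap μ q g p δ) ^ j) else 0) +
        ENNReal.ofReal (2 * lam ^ n) *
          max 1 (ENNReal.ofReal (lam⁻¹ * (1 + L * δ - minOverlap μ q g p δ))) ^ (j - 1) *
          (1 + ∫⁻ x, ENNReal.ofReal (p (x.1 - x.2)) ∂(ξ.prod ξ')) := by
  obtain ⟨j, rfl⟩ := Nat.exists_eq_add_of_le' hj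
  have hprob : IsMarkovKernel P :=
    ⟨fun x => hP x ▸ isProbabilityMeasure_translateLaw hq0 hq1 (g x)⟩
  have hlam0 : 0 ≤ lam := hL.trans hlam.le
  set ε := minOverlap μ q g p δ
  set B := max 1 (lam⁻¹ * (1 + L * δ - ε))
  have hdrift (x y : E) := near_or_far_drift hL hlam hδ (apply_nonneg p (x - y))
    (half_translationDist_le_one_sub_minOverlap (g := g) hq0 hq1)
    (by linarith [translationDist_le_two hq0 hq1 (g x - g y)])
  have hosc (φ : E → ℝ) (hφ : Measurable φ) (hφ1 : ∀ x, |φ x| ≤ 1) :=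
    (isSmoothing_of_eq_translateLaw hp hg hq0 hq1 hP).markovOp_iterate_sub_le
      (fun x y => apply_nonneg p (x - y)) (sub_nonneg.2 (minOverlap_le_one μ q g p δ)) hlam0
      (le_max_left _ _) hdrift hφ hφ1 n j
  refine (fDist_one_iterMeas_le P (fun x y => apply_nonneg p (x - y)) (map_sub_rev p)
    (by positivity) hosc ξ ξ').trans_eq ?_
  rw [ENNReal.ofReal_mul (by positivity), ENNReal.ofReal_pow (by positivity), ENNReal.ofReal_max,
    ENNReal.ofReal_one, Nat.add_sub_cancel, failureBound, apply_ite ENNReal.ofReal,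
    ENNReal.ofReal_zero]

end AutoregressiveChain

/-- Proposition 6: explicit total variation bound for the functional-autoregressive chain
`X_{k+1} = g(X_k) + Z_k`, with `ε(δ)` as in (23) and
`B = max(1, λ⁻¹(1 + ‖g‖_Lip δ - ε(δ)))`. -/
theorem total_variation_bound_autoregressive
    (d : ℕ) (g : (Fin d → ℝ) → (Fin d → ℝ)) (q : (Fin d → ℝ) → ℝ)
    -- `nn` is a norm on ℝ^d
    (nn : (Fin d → ℝ) → ℝ)
    (hnn0 : ∀ x, nn x = 0 ↔ x = 0)
    (hnnadd : ∀ x y, nn (x + y) ≤ nn x + nn y)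
    (hnnsmul : ∀ (a : ℝ) x, nn (a • x) = |a| * nn x)
    -- `g` is Lipschitz with constant `L = ‖g‖_Lip < 1`
    (L : ℝ) (hL0 : 0 ≤ L) (hL1 : L < 1)
    (hLip : ∀ x y, nn (g x - g y) ≤ L * nn (x - y))
    -- `q` is a continuous, everywhere positive probability density
    (hqc : Continuous q) (hqpos : ∀ z, 0 < q z) (hqint : ∫ z, q z = 1)
    -- the transition kernel `P(x, A) = ∫_A q(y - g(x)) dy`
    (P : Kernel (Fin d → ℝ) (Fin d → ℝ)) [IsMarkovKernel P]
    (hP : ∀ x A, MeasurableSet A → P x A = ∫⁻ y in A, ENNReal.ofReal (q (y - g x)))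
    (lam : ℝ) (hlamL : L < lam) (hlam1 : lam < 1)
    (δ : ℝ) (hδ : (1 - lam) / (lam - L) < δ)
    (n j : ℕ) (hn : 1 ≤ n) (hj1 : 1 ≤ j) (hj2 : j ≤ n + 1)
    (ξ ξ' : Measure (Fin d → ℝ)) [IsProbabilityMeasure ξ] [IsProbabilityMeasure ξ'] :
    fDist (fun _ => 1) (iterMeas P ξ n) (iterMeas P ξ' n) ≤
      (if j ≤ n then
        ENNReal.ofReal (2 * (1 - (1 - (1 / 2) * sSup {r : ℝ |
          ∃ p : (Fin d → ℝ) × (Fin d → ℝ), nn (p.1 - p.2) ≤ δ ∧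
            r = ∫ z, |q (z - (g p.1 - g p.2)) - q z|})) ^ j)
      else 0) +
        ENNReal.ofReal (2 * lam ^ n) *
          (max 1 (ENNReal.ofReal (lam⁻¹ * (1 + L * δ -
            (1 - (1 / 2) * sSup {r : ℝ | ∃ p : (Fin d → ℝ) × (Fin d → ℝ),
              nn (p.1 - p.2) ≤ δ ∧ r = ∫ z, |q (z - (g p.1 - g p.2)) - q z|}))))) ^ (j - 1) *
          (1 + ∫⁻ p, ENNReal.ofReal (nn (p.1 - p.2)) ∂(ξ.prod ξ')) := by
  let p : Seminorm ℝ (Fin d → ℝ) := .of nn hnnadd hnnsmul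
  exact total_variation_bound_autoregressive_general (p := p.toAddGroupSeminorm) (q := q) (g := g)
    p.convexOn.locallyLipschitz.continuous hL0 hLip (fun z => (hqpos z).le) hqint
    (fun x => Measure.ext fun A hA => (hP x A hA).trans (withDensity_apply _ hA).symm)
    hlamL hδ n hj1 ξ ξ'
end

section
/- Assume (NS1) and let f : X → [1,∞) be measurable. Then for any probability measures ξ, ξ' on X and any n ≥ 1, ‖ξP_1⋯P_n − ξ'P_1⋯P_n‖_f ≤ E*_{ξ⊗ξ'}[(f(X_n) + f(X'_n)) Π_{i=1}^{n} (1 − ε_i 1_{C̄_i}(X̄_{i−1}))], where X̄_i = (X_i, X'_i). -/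
/-!
If every step `Q` of a chain on `X × X` has, up to a factor `w p` and a common measure, the
marginals `P p.1` and `P p.2`, then one step turns a bound `g x - g x' ≤ W (x, x')` into
`P g x - P g x' ≤ w p * ∫ W dQ p` for `p = (x, x')`, because the common measure contributes equally
to both terms on the left. For `P*` the factor is `1 - ε` on `C̄`, where the common measure is
`ε ν`, and `1` off `C̄`. Starting from `φ x - φ x' ≤ f x + f x'` for `|φ| ≤ f` and going back from
time `n` to time `0`, the factors multiply up to the weight inside the expectation, so no law on
path space is needed. Integrability issues are avoided by splitting `φ` into `φ⁺ - φ⁻` and writing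
all inequalities without subtraction.
-/

open MeasureTheory ProbabilityTheory Set
open scoped ENNReal

/-- `iterMeasNH P ξ n = ξ P₁ ⋯ Pₙ` for the time-inhomogeneous chain with kernels `P k`. -/
noncomputable def iterMeasNH {X : Type*} [MeasurableSpace X] (P : ℕ → Kernel X X)
    (ξ : Measure X) : ℕ → Measure X
  | 0 => ξ
  | n + 1 => (iterMeasNH P ξ n).bind (fun x => P (n + 1) x)

/-- Expectation `E_y[φ(X_k, …, X_{k+n})]` for the time-inhomogeneous Markov chain with kernels
`κ` (kernel `κ i` driving the step from time `i - 1` to time `i`), started at time `k` in `y`. -/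
noncomputable def kexpNH {Y : Type*} [MeasurableSpace Y] (κ : ℕ → Kernel Y Y) :
    ℕ → (n : ℕ) → Y → ((Fin (n + 1) → Y) → ℝ≥0∞) → ℝ≥0∞
  | _, 0, y, φ => φ (fun _ => y)
  | k, n + 1, y, φ => ∫⁻ y', kexpNH κ (k + 1) n y' (fun v => φ (Fin.cons y v)) ∂(κ (k + 1) y)

/-- Expectation `E_μ[φ(X₀,…,Xₙ)]` for the time-inhomogeneous Markov chain with kernels `κ`
and initial law `μ`. -/
noncomputable def chainExpNH {Y : Type*} [MeasurableSpace Y] (κ : ℕ → Kernel Y Y)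
    (μ : Measure Y) (n : ℕ) (φ : (Fin (n + 1) → Y) → ℝ≥0∞) : ℝ≥0∞ :=
  ∫⁻ y, kexpNH κ 0 n y φ ∂μ

section TransitionKernel

variable {X : Type*} [MeasurableSpace X]

/-- The transition kernel `P_{k+1} ⋯ P_{k+n}` from time `k` to time `k + n` of the
time-inhomogeneous chain with kernels `P`. -/
noncomputable def transKernelNH (P : ℕ → Kernel X X) : ℕ → ℕ → Kernel X X
  | _, 0 => Kernel.id
  | k, n + 1 => transKernelNH P (k + 1) n ∘ₖ P (k + 1)

theorem iterMeasNH_add (P : ℕ → Kernel X X) (ξ : Measure X) (k n : ℕ) :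
    iterMeasNH P ξ (k + n) = (iterMeasNH P ξ k).bind (transKernelNH P k n) := by
  induction n generalizing k with
  | zero => exact Measure.id_comp.symm
  | succ n ih =>
    calc iterMeasNH P ξ (k + (n + 1)) = iterMeasNH P ξ (k + 1 + n) := by
          rw [Nat.add_right_comm, Nat.add_assoc]
      _ = ((iterMeasNH P ξ k).bind (P (k + 1))).bind (transKernelNH P (k + 1) n) := ih (k + 1)
      _ = (iterMeasNH P ξ k).bind (transKernelNH P k (n + 1)) := Measure.comp_assoc

theorem lintegral_transKernelNH_succ (P : ℕ → Kernel X X) {g : X → ℝ≥0∞} (hg : Measurable g)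
    (k n : ℕ) (x : X) :
    ∫⁻ y, g y ∂(transKernelNH P k (n + 1) x) =
      ∫⁻ z, ∫⁻ y, g y ∂(transKernelNH P (k + 1) n z) ∂(P (k + 1) x) :=
  Kernel.lintegral_comp _ _ _ hg

theorem lintegral_iterMeasNH (P : ℕ → Kernel X X) (ξ : Measure X) {g : X → ℝ≥0∞}
    (hg : Measurable g) (n : ℕ) :
    ∫⁻ x, g x ∂(iterMeasNH P ξ n) = ∫⁻ x, ∫⁻ y, g y ∂(transKernelNH P 0 n x) ∂ξ := by
  rw [← Nat.zero_add n, iterMeasNH_add, Nat.zero_add]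
  exact Measure.lintegral_bind (Kernel.aemeasurable _) hg.aemeasurable

end TransitionKernel

section WeightedExpectation

variable {Y : Type*}

/-- The functional `F(Y_{k+n}) ∏_{i=k+1}^{k+n} w_i(Y_{i-1})` of a path `(Y_k, …, Y_{k+n})`; the path
is indexed from `0`, so that `v i` is the state at time `k + i`. -/
noncomputable def weightedTerminal (w : ℕ → Y → ℝ≥0∞) (F : Y → ℝ≥0∞) (k n : ℕ)
    (v : Fin (n + 1) → Y) : ℝ≥0∞ :=
  F (v (Fin.last n)) * ∏ i : Fin n, w (k + i.1 + 1) (v i.castSucc)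

theorem weightedTerminal_zero_left (w : ℕ → Y → ℝ≥0∞) (F : Y → ℝ≥0∞) (n : ℕ) :
    weightedTerminal w F 0 n =
      fun v => F (v (Fin.last n)) * ∏ i : Fin n, w (i.1 + 1) (v i.castSucc) :=
  funext fun v => by simp only [weightedTerminal, zero_add]

theorem weightedTerminal_cons (w : ℕ → Y → ℝ≥0∞) (F : Y → ℝ≥0∞) (k n : ℕ) (y : Y)
    (v : Fin (n + 1) → Y) :
    weightedTerminal w F k (n + 1) (Fin.cons y v) =
      w (k + 1) y * weightedTerminal w F (k + 1) n v := by
  simp only [weightedTerminal, Fin.prod_univ_succ, ← Fin.succ_last, Fin.cons_succ,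
    Fin.castSucc_zero, Fin.cons_zero, Fin.val_zero, Fin.val_succ, ← Fin.succ_castSucc, add_zero,
    ← add_assoc, Nat.add_right_comm k _ 1]
  exact mul_left_comm _ _ _

variable [MeasurableSpace Y]

/-- The inequality can be strict when `c = ∞` and `φ` is not measurable. -/
theorem mul_kexpNH_le (κ : ℕ → Kernel Y Y) (c : ℝ≥0∞) (k n : ℕ) (y : Y)
    (φ : (Fin (n + 1) → Y) → ℝ≥0∞) :
    c * kexpNH κ k n y φ ≤ kexpNH κ k n y (fun v => c * φ v) := by
  induction n generalizing k y with
  | zero => exact le_rfl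
  | succ n ih => exact (lintegral_const_mul_le _ _).trans (lintegral_mono fun y' => ih _ y' _)

theorem mul_lintegral_kexpNH_weightedTerminal_le (κ : ℕ → Kernel Y Y) (w : ℕ → Y → ℝ≥0∞)
    (F : Y → ℝ≥0∞) (k n : ℕ) (y : Y) :
    w (k + 1) y * ∫⁻ y', kexpNH κ (k + 1) n y' (weightedTerminal w F (k + 1) n) ∂(κ (k + 1) y) ≤
      kexpNH κ k (n + 1) y (weightedTerminal w F k (n + 1)) := by
  simp only [kexpNH, weightedTerminal_cons]
  exact (lintegral_const_mul_le _ _).trans (lintegral_mono fun y' => mul_kexpNH_le ..)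

end WeightedExpectation

section SplitCoupling

variable {X : Type*}

/-- `W` bounds the increments of `a - b`, that is `(a - b) x - (a - b) x' ≤ W (x, x')`, written
without subtraction because `a`, `b` and `W` may be infinite. -/
def IsCouplingBound (a b : X → ℝ≥0∞) (W : X × X → ℝ≥0∞) : Prop :=
  ∀ p : X × X, a p.1 + b p.2 ≤ b p.1 + a p.2 + W p

theorem isCouplingBound_of_le {a b g : X → ℝ≥0∞} (ha : a ≤ g) (hb : b ≤ g) :
    IsCouplingBound a b (fun p => g p.1 + g p.2) :=
  fun p => (add_le_add (ha p.1) (hb p.2)).trans le_add_self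

variable [MeasurableSpace X]

/-- `ρ` couples what is left of `μ` and `μ'` after removing a common part `η`, up to the mass `c` of
the remainder. For `c = 1` and `η = 0` this is a coupling of `μ` and `μ'`. -/
def IsSplitCoupling (c : ℝ≥0∞) (ρ : Measure (X × X)) (μ μ' : Measure X) : Prop :=
  ∃ η : Measure X, c • ρ.fst + η = μ ∧ c • ρ.snd + η = μ'

theorem isSplitCoupling_of_apply {c e : ℝ≥0∞} {ρ : Measure (X × X)} {μ μ' ν : Measure X}
    (h₁ : ∀ A, MeasurableSet A → c * ρ (A ×ˢ univ) + e * ν A = μ A)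
    (h₂ : ∀ A, MeasurableSet A → c * ρ (univ ×ˢ A) + e * ν A = μ' A) :
    IsSplitCoupling c ρ μ μ' := by
  refine ⟨e • ν, Measure.ext fun A hA => ?_, Measure.ext fun A hA => ?_⟩
  · simp [Measure.fst_apply hA, ← h₁ A hA, Set.prod_univ]
  · simp [Measure.snd_apply hA, ← h₂ A hA, Set.univ_prod]

theorem isSplitCoupling_one_of_apply {ρ : Measure (X × X)} {μ μ' : Measure X}
    (h : ∀ A, MeasurableSet A → ρ (A ×ˢ univ) = μ A ∧ ρ (univ ×ˢ A) = μ' A) :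
    IsSplitCoupling 1 ρ μ μ' :=
  isSplitCoupling_of_apply (e := 0) (ν := 0) (fun A hA => by simpa using (h A hA).1)
    (fun A hA => by simpa using (h A hA).2)

theorem isSplitCoupling_one_sub_indicator {C : Set (X × X)} {ε : ℝ} (hε : 0 ≤ ε) {p : X × X}
    {ρ : Measure (X × X)} {μ μ' : Measure X}
    (hmem : p ∈ C → IsSplitCoupling (ENNReal.ofReal (1 - ε)) ρ μ μ')
    (hnotMem : p ∉ C → IsSplitCoupling 1 ρ μ μ') :
    IsSplitCoupling (1 - ENNReal.ofReal ε * C.indicator (fun _ => 1) p) ρ μ μ' := by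
  by_cases hp : p ∈ C
  · simpa [hp, ENNReal.ofReal_sub 1 hε] using hmem hp
  · simpa [hp] using hnotMem hp

theorem IsCouplingBound.lintegral_add_le {a b : X → ℝ≥0∞} {W : X × X → ℝ≥0∞}
    (hW : IsCouplingBound a b W) (ha : Measurable a) (hb : Measurable b) (ρ : Measure (X × X)) :
    ∫⁻ x, a x ∂ρ.fst + ∫⁻ x, b x ∂ρ.snd ≤
      ∫⁻ x, b x ∂ρ.fst + ∫⁻ x, a x ∂ρ.snd + ∫⁻ p, W p ∂ρ := by
  rw [Measure.fst, Measure.snd, lintegral_map ha measurable_fst, lintegral_map hb measurable_fst,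
    lintegral_map ha measurable_snd, lintegral_map hb measurable_snd,
    ← lintegral_add_left (by fun_prop), ← lintegral_add_left (by fun_prop),
    ← lintegral_add_left (by fun_prop)]
  exact lintegral_mono hW

theorem IsSplitCoupling.lintegral_add_le {c : ℝ≥0∞} {ρ : Measure (X × X)} {μ μ' : Measure X}
    (hρ : IsSplitCoupling c ρ μ μ') {a b : X → ℝ≥0∞} {W : X × X → ℝ≥0∞}
    (hW : IsCouplingBound a b W) (ha : Measurable a) (hb : Measurable b) :
    ∫⁻ x, a x ∂μ + ∫⁻ x, b x ∂μ' ≤ ∫⁻ x, b x ∂μ + ∫⁻ x, a x ∂μ' + c * ∫⁻ p, W p ∂ρ := by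
  obtain ⟨η, rfl, rfl⟩ := hρ
  simp only [lintegral_add_measure, lintegral_smul_measure, smul_eq_mul]
  calc _ = c * (∫⁻ x, a x ∂ρ.fst + ∫⁻ x, b x ∂ρ.snd) + (∫⁻ x, a x ∂η + ∫⁻ x, b x ∂η) := by ring
    _ ≤ c * (∫⁻ x, b x ∂ρ.fst + ∫⁻ x, a x ∂ρ.snd + ∫⁻ p, W p ∂ρ) +
        (∫⁻ x, a x ∂η + ∫⁻ x, b x ∂η) := by
      gcongr c * ?_ + _
      exact hW.lintegral_add_le ha hb ρ
    _ = _ := by ring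

end SplitCoupling

section Iteration

variable {X : Type*} [MeasurableSpace X] {P : ℕ → Kernel X X} {Q : ℕ → Kernel (X × X) (X × X)}
  {w : ℕ → X × X → ℝ≥0∞}

theorem IsCouplingBound.lintegral_transKernelNH
    (hQ : ∀ k, 1 ≤ k → ∀ p, IsSplitCoupling (w k p) (Q k p) (P k p.1) (P k p.2))
    {a b : X → ℝ≥0∞} {F : X × X → ℝ≥0∞} (hF : IsCouplingBound a b F) (ha : Measurable a)
    (hb : Measurable b) (k n : ℕ) :
    IsCouplingBound (fun x => ∫⁻ y, a y ∂(transKernelNH P k n x))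
      (fun x => ∫⁻ y, b y ∂(transKernelNH P k n x))
      (fun p => kexpNH Q k n p (weightedTerminal w F k n)) := by
  induction n generalizing k with
  | zero =>
    simpa [transKernelNH, kexpNH, weightedTerminal, Kernel.id_apply, lintegral_dirac', ha, hb]
      using hF
  | succ n ih =>
    intro p
    simp only [lintegral_transKernelNH_succ P ha, lintegral_transKernelNH_succ P hb]
    calc _ ≤ _ := (hQ (k + 1) (Nat.le_add_left 1 k) p).lintegral_add_le (ih (k + 1))
          ha.lintegral_kernel hb.lintegral_kernel
      _ ≤ _ := by
        gcongr
        exact mul_lintegral_kexpNH_weightedTerminal_le Q w F k n p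

theorem IsCouplingBound.lintegral_iterMeasNH_add_le
    (hQ : ∀ k, 1 ≤ k → ∀ p, IsSplitCoupling (w k p) (Q k p) (P k p.1) (P k p.2))
    {a b : X → ℝ≥0∞} {F : X × X → ℝ≥0∞} (hF : IsCouplingBound a b F) (ha : Measurable a)
    (hb : Measurable b) (π : Measure (X × X)) (n : ℕ) :
    ∫⁻ x, a x ∂(iterMeasNH P π.fst n) + ∫⁻ x, b x ∂(iterMeasNH P π.snd n) ≤
      ∫⁻ x, b x ∂(iterMeasNH P π.fst n) + ∫⁻ x, a x ∂(iterMeasNH P π.snd n) +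
        chainExpNH Q π n (weightedTerminal w F 0 n) := by
  simp only [lintegral_iterMeasNH P _ ha, lintegral_iterMeasNH P _ hb]
  exact (hF.lintegral_transKernelNH hQ ha hb 0 n).lintegral_add_le
    ha.lintegral_kernel hb.lintegral_kernel π

end Iteration

section FDist

variable {X : Type*} [MeasurableSpace X] {μ μ' : Measure X} {B : ℝ≥0∞}

theorem ofReal_integral_sub_le {φ : X → ℝ} (hμ : Integrable φ μ) (hμ' : Integrable φ μ')
    (h : ∫⁻ x, ENNReal.ofReal (φ x) ∂μ + ∫⁻ x, ENNReal.ofReal (-φ x) ∂μ' ≤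
      ∫⁻ x, ENNReal.ofReal (-φ x) ∂μ + ∫⁻ x, ENNReal.ofReal (φ x) ∂μ' + B) :
    ENNReal.ofReal (∫ x, φ x ∂μ - ∫ x, φ x ∂μ') ≤ B := by
  rcases eq_or_ne B ⊤ with rfl | hB
  · exact le_top
  have hpos : ∫⁻ x, ENNReal.ofReal (φ x) ∂μ ≠ ⊤ := hμ.lintegral_lt_top.ne
  have hneg : ∫⁻ x, ENNReal.ofReal (-φ x) ∂μ ≠ ⊤ := hμ.neg.lintegral_lt_top.ne
  have hpos' : ∫⁻ x, ENNReal.ofReal (φ x) ∂μ' ≠ ⊤ := hμ'.lintegral_lt_top.ne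
  have hneg' : ∫⁻ x, ENNReal.ofReal (-φ x) ∂μ' ≠ ⊤ := hμ'.neg.lintegral_lt_top.ne
  refine ENNReal.ofReal_le_of_le_toReal ?_
  rw [integral_eq_lintegral_pos_part_sub_lintegral_neg_part hμ,
    integral_eq_lintegral_pos_part_sub_lintegral_neg_part hμ']
  have h_real := ENNReal.toReal_mono (by finiteness) h
  rw [ENNReal.toReal_add hpos hneg', ENNReal.toReal_add (by finiteness) hB,
    ENNReal.toReal_add hneg hpos'] at h_real
  linarith

theorem fDist_le_of_lintegral_add_le {f : X → ℝ}
    (h : ∀ a b : X → ℝ≥0∞, Measurable a → Measurable b → (∀ x, a x ≤ ENNReal.ofReal (f x)) →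
      (∀ x, b x ≤ ENNReal.ofReal (f x)) →
      ∫⁻ x, a x ∂μ + ∫⁻ x, b x ∂μ' ≤ ∫⁻ x, b x ∂μ + ∫⁻ x, a x ∂μ' + B) :
    fDist f μ μ' ≤ B := by
  have one_sided : ∀ φ : X → ℝ, Measurable φ → (∀ x, |φ x| ≤ f x) → Integrable φ μ →
      Integrable φ μ' → ENNReal.ofReal (∫ x, φ x ∂μ - ∫ x, φ x ∂μ') ≤ B :=
    fun φ hφ hφf hμ hμ' => ofReal_integral_sub_le hμ hμ' <|
      h _ _ hφ.ennreal_ofReal hφ.neg.ennreal_ofReal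
        (fun x => ENNReal.ofReal_le_ofReal ((le_abs_self _).trans (hφf x)))
        (fun x => ENNReal.ofReal_le_ofReal ((neg_le_abs _).trans (hφf x)))
  simp only [fDist, iSup_le_iff]
  intro φ hφ hφf hμ hμ'
  rcases abs_choice (∫ x, φ x ∂μ - ∫ x, φ x ∂μ') with habs | habs <;> rw [habs]
  · exact one_sided φ hφ hφf hμ hμ'
  · simpa [integral_neg, neg_add_eq_sub] using
      one_sided (fun x => -φ x) hφ.neg (by simpa using hφf) hμ.neg hμ'.neg

end FDist

theorem time_inhomogeneous_coupling_inequality_general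
    {X : Type*} [MeasurableSpace X] {P : ℕ → Kernel X X} {Q : ℕ → Kernel (X × X) (X × X)}
    {w : ℕ → X × X → ℝ≥0∞}
    (hQ : ∀ k, 1 ≤ k → ∀ p, IsSplitCoupling (w k p) (Q k p) (P k p.1) (P k p.2))
    (f : X → ℝ) (π : Measure (X × X)) (n : ℕ) :
    fDist f (iterMeasNH P π.fst n) (iterMeasNH P π.snd n) ≤
      chainExpNH Q π n
        (fun v => (ENNReal.ofReal (f (v (Fin.last n)).1) + ENNReal.ofReal (f (v (Fin.last n)).2)) *
          ∏ i : Fin n, w (i.1 + 1) (v i.castSucc)) :=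
  fDist_le_of_lintegral_add_le fun a b ha hb haf hbf => by
    simpa only [weightedTerminal_zero_left] using
      (isCouplingBound_of_le haf hbf).lintegral_iterMeasNH_add_le hQ ha hb π n

/-- Lemma 7: the time-inhomogeneous coupling inequality
`‖ξP₁⋯Pₙ - ξ'P₁⋯Pₙ‖_f ≤ E*_{ξ⊗ξ'}[(f(Xₙ) + f(X'ₙ)) ∏_{i=1}^n (1 - ε_i 1_{C̄ᵢ}(X̄_{i-1}))]`. -/
theorem time_inhomogeneous_coupling_inequality
    {X : Type*} [MeasurableSpace X] (P : ℕ → Kernel X X) [∀ k, IsMarkovKernel (P k)]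
    -- (NS1)
    (Cbar : ℕ → Set (X × X)) (hCbar : ∀ k, MeasurableSet (Cbar k))
    (ε : ℕ → ℝ) (hε : ∀ k, 1 ≤ k → 0 ≤ ε k ∧ ε k < 1)
    (ν : ℕ → X × X → Measure X) (hν : ∀ k, 1 ≤ k → ∀ p ∈ Cbar k, IsProbabilityMeasure (ν k p))
    (hminor : ∀ k, 1 ≤ k → ∀ p ∈ Cbar k, ∀ A : Set X, MeasurableSet A →
      ENNReal.ofReal (ε k) * ν k p A ≤ min (P k p.1 A) (P k p.2 A))
    -- the residual kernels R̄ₖ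
    (Rbar : ℕ → Kernel (X × X) (X × X)) [∀ k, IsMarkovKernel (Rbar k)]
    (hRbar1 : ∀ k, 1 ≤ k → ∀ p ∈ Cbar k, ∀ A : Set X, MeasurableSet A →
      ENNReal.ofReal (1 - ε k) * Rbar k p (A ×ˢ Set.univ) + ENNReal.ofReal (ε k) * ν k p A =
        P k p.1 A)
    (hRbar2 : ∀ k, 1 ≤ k → ∀ p ∈ Cbar k, ∀ A : Set X, MeasurableSet A →
      ENNReal.ofReal (1 - ε k) * Rbar k p (Set.univ ×ˢ A) + ENNReal.ofReal (ε k) * ν k p A =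
        P k p.2 A)
    -- the kernels P̄ₖ
    (Pbar : ℕ → Kernel (X × X) (X × X)) [∀ k, IsMarkovKernel (Pbar k)]
    (hPbar1 : ∀ k, 1 ≤ k → ∀ p ∈ Cbar k, ∀ A A' : Set X, MeasurableSet A → MeasurableSet A' →
      Pbar k p (A ×ˢ A') = ENNReal.ofReal (1 - ε k) * Rbar k p (A ×ˢ A') +
        ENNReal.ofReal (ε k) * ν k p (A ∩ A'))
    (hPbar2 : ∀ k, 1 ≤ k → ∀ p ∉ Cbar k, ∀ A : Set X, MeasurableSet A →
      Pbar k p (A ×ˢ Set.univ) = P k p.1 A ∧ Pbar k p (Set.univ ×ˢ A) = P k p.2 A)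
    -- the kernels P*ₖ
    (Pstar : ℕ → Kernel (X × X) (X × X))
    (hPstar1 : ∀ k, 1 ≤ k → ∀ p ∈ Cbar k, Pstar k p = Rbar k p)
    (hPstar2 : ∀ k, 1 ≤ k → ∀ p ∉ Cbar k, Pstar k p = Pbar k p)
    (f : X → ℝ) (hf1 : ∀ x, 1 ≤ f x) (hfm : Measurable f)
    (ξ ξ' : Measure X) [IsProbabilityMeasure ξ] [IsProbabilityMeasure ξ']
    (n : ℕ) (hn : 1 ≤ n) :
    fDist f (iterMeasNH P ξ n) (iterMeasNH P ξ' n) ≤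
      chainExpNH Pstar (ξ.prod ξ') n
        (fun v => (ENNReal.ofReal (f (v (Fin.last n)).1) + ENNReal.ofReal (f (v (Fin.last n)).2)) *
          ∏ i : Fin n, (1 - ENNReal.ofReal (ε (i.1 + 1)) *
            Set.indicator (Cbar (i.1 + 1)) (fun _ => (1 : ℝ≥0∞)) (v i.castSucc))) := by
  have hPstar : ∀ k, 1 ≤ k → ∀ p, IsSplitCoupling
      (1 - ENNReal.ofReal (ε k) * (Cbar k).indicator (fun _ => 1) p) (Pstar k p)
      (P k p.1) (P k p.2) := fun k hk p =>
    isSplitCoupling_one_sub_indicator (hε k hk).1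
      (fun hp => hPstar1 k hk p hp ▸
        isSplitCoupling_of_apply (hRbar1 k hk p hp) (hRbar2 k hk p hp))
      (fun hp => hPstar2 k hk p hp ▸ isSplitCoupling_one_of_apply (hPbar2 k hk p hp))
  simpa only [Measure.fst_prod, Measure.snd_prod] using
    time_inhomogeneous_coupling_inequality_general hPstar f (ξ.prod ξ') n
end
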